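/- arXiv:1504.06213 — 2 statements merged into one kernel-verified Lean document; each statement's English description precedes it below -/
import Mathlib

section
/- Let F be a field of characteristic zero and let 0 ≤ μ < 1 be a constant. There exist constants c > 0 and n₀ (depending only on μ) such that for all n ≥ n₀ and every point a ∈ F^N the following holds: if the translated polynomial NW_{n,μ}(X̄ + ā) = ∑_{i=1}^{T} ∏_{j=1}^{d} Q_{ij} where each Q_{ij} ∈ F[X_1,…,X_N] depends on at most N^μ of the variables, then T·d ≥ n^{c·√n}. -/
open MvPolynomial

/-- The parameter `γ` in the definition of the Nisan–Wigderson polynomial,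
with `δ = (1-μ)/2`. -/
noncomputable def nwGamma (μ : ℝ) : ℝ :=
  (2 * (μ + (1 - μ) / 2) + 1) / (1 - (μ + (1 - μ) / 2))

/-- The degree parameter `D` of the Nisan–Wigderson polynomial `NW_{n,μ}`:
`D = ((γ+ρ)/(2(1+γ)))·n` with `ρ = (μ+δ)·log N/log n`. -/
noncomputable def nwDreal (μ : ℝ) (n N : ℕ) : ℝ :=
  (nwGamma μ + (μ + (1 - μ) / 2) * Real.log N / Real.log n) / (2 * (1 + nwGamma μ)) * n

/-- The Nisan–Wigderson polynomial `NW_{n,μ}` on the variables `X_{i,j}`,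
`i ∈ [n]`, `j ∈ F_ψ`. -/
noncomputable def NWpoly (F : Type*) [Field F] (μ : ℝ) (n ψ : ℕ) [NeZero ψ] :
    MvPolynomial (Fin n × ZMod ψ) F :=
  ∑ c : Fin ⌊nwDreal μ n (n * ψ)⌋₊ → ZMod ψ,
    ∏ i : Fin n, X (i, ∑ k : Fin ⌊nwDreal μ n (n * ψ)⌋₊, c k * ((i : ℕ) : ZMod ψ) ^ (k : ℕ))

/-! ## Functions on subsets of a finite set, filtered by degree -/

/-- The function on subsets `S` that indicates `A ⊆ S`. -/
def upIndicator {V : Type*} [DecidableEq V] (F : Type*) [Field F] (A : Finset V) : Finset V → F :=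
  fun S => if A ⊆ S then 1 else 0

/-- The functions on subsets of `V` that are multilinear polynomials of degree at most `s`. -/
def degreeLE {V : Type*} [DecidableEq V] (F : Type*) [Field F] (s : ℕ) :
    Submodule F (Finset V → F) :=
  Submodule.span F (upIndicator F '' {A | A.card ≤ s})

section degreeLE

variable {V F : Type*} [DecidableEq V] [Field F]

theorem upIndicator_mul (A B : Finset V) :
    upIndicator F A * upIndicator F B = upIndicator F (A ∪ B) := by
  funext S
  by_cases hA : A ⊆ S <;> by_cases hB : B ⊆ S <;>
    simp [upIndicator, hA, hB, Finset.union_subset_iff]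

theorem degreeLE_mono {s t : ℕ} (h : s ≤ t) : degreeLE (V := V) F s ≤ degreeLE F t :=
  Submodule.span_mono (Set.image_mono fun _ hA => le_trans hA h)

theorem upIndicator_mul_mem {A : Finset V} {s t : ℕ} (hA : A.card ≤ t) {f : Finset V → F}
    (hf : f ∈ degreeLE F s) : upIndicator F A * f ∈ degreeLE F (t + s) := by
  induction hf using Submodule.span_induction with
  | mem f hf =>
    obtain ⟨B, hB, rfl⟩ := hf
    rw [upIndicator_mul]
    refine Submodule.subset_span ⟨_, ?_, rfl⟩
    exact (Finset.card_union_le _ _).trans (add_le_add hA hB)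
  | zero => simp
  | add f g _ _ hf hg => rw [mul_add]; exact add_mem hf hg
  | smul c f _ hf => rw [mul_smul_comm]; exact Submodule.smul_mem _ _ hf

theorem mem_degreeLE_of_inter (U : Finset V) :
    ∀ f : Finset V → F, (∀ S S', S ∩ U = S' ∩ U → f S = f S') → f ∈ degreeLE F U.card := by
  induction U using Finset.induction_on with
  | empty =>
    intro f hf
    have : f = f ∅ • upIndicator F ∅ := by
      funext S
      simp [upIndicator, hf S ∅ (by simp)]
    rw [this]
    exact Submodule.smul_mem _ _ (Submodule.subset_span ⟨∅, by simp, rfl⟩)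
  | insert u U hu ih =>
    intro f hf
    have key : ∀ S S' : Finset V, S ∩ U = S' ∩ U →
        (S \ {u}) ∩ insert u U = (S' \ {u}) ∩ insert u U ∧
        (insert u S) ∩ insert u U = (insert u S') ∩ insert u U := by
      intro S S' h
      have h' : ∀ v, v ∈ U → (v ∈ S ↔ v ∈ S') := fun v hv => by
        have := Finset.ext_iff.mp h v
        simpa [hv] using this
      constructor <;> ext v <;> have := h' v <;>
        simp only [Finset.mem_inter, Finset.mem_sdiff, Finset.mem_singleton, Finset.mem_insert] <;>
        tauto
    have h0 := ih (fun S => f (S \ {u})) fun S S' h => hf _ _ (key S S' h).1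
    have h1 := ih (fun S => f (insert u S)) fun S S' h => hf _ _ (key S S' h).2
    have hdec : f = (fun S => f (S \ {u})) +
        upIndicator F {u} * ((fun S => f (insert u S)) - fun S => f (S \ {u})) := by
      funext S
      by_cases h : u ∈ S
      · simp [upIndicator, h]
      · simp [upIndicator, h, Finset.sdiff_singleton_eq_erase]
    rw [hdec, Finset.card_insert_of_notMem hu]
    refine add_mem (degreeLE_mono (Nat.le_succ _) h0) ?_
    rw [add_comm]
    exact upIndicator_mul_mem (by simp) (sub_mem h1 h0)

/-- The coefficient of the multilinear monomial `γ`. -/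
def topCoeff (F : Type*) [Field F] (γ : Finset V) : (Finset V → F) →ₗ[F] F :=
  ∑ S ∈ γ.powerset, (-1 : F) ^ (γ \ S).card • LinearMap.proj S

theorem topCoeff_upIndicator (γ A : Finset V) :
    topCoeff F γ (upIndicator F A) = if A = γ then 1 else 0 := by
  have h1 : topCoeff F γ (upIndicator F A) =
      ∑ S ∈ γ.powerset, (-1 : F) ^ (γ \ S).card * (if A ⊆ S then 1 else 0) := by
    simp [topCoeff, upIndicator, LinearMap.sum_apply]
  rw [h1]
  by_cases hA : A ⊆ γ
  · have h2 := Finset.prod_add (fun _ : V => (1 : F)) (fun u => if u ∈ A then 0 else -1) γ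
    have h3 : ∀ S ∈ γ.powerset, (-1 : F) ^ (γ \ S).card * (if A ⊆ S then 1 else 0) =
        (∏ i ∈ S, (1 : F)) * ∏ i ∈ γ \ S, (if i ∈ A then 0 else -1) := by
      intro S _
      rw [Finset.prod_const_one, one_mul]
      split_ifs with hS
      · rw [mul_one, ← Finset.prod_const]
        refine Finset.prod_congr rfl fun v hv => ?_
        rw [if_neg fun h => (Finset.mem_sdiff.mp hv).2 (hS h)]
      · obtain ⟨v, hv, hvS⟩ := Finset.not_subset.mp hS
        rw [mul_zero, Finset.prod_eq_zero (Finset.mem_sdiff.mpr ⟨hA hv, hvS⟩) (by simp [hv])]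
    rw [Finset.sum_congr rfl h3, ← h2]
    have h4 : ∀ i, ((1 : F) + if i ∈ A then 0 else -1) = if i ∈ A then 1 else 0 := by
      intro i; split_ifs <;> simp
    simp only [h4]
    split_ifs with h
    · subst h
      exact Finset.prod_eq_one fun i hi => by simp [hi]
    · obtain ⟨v, hv, hvA⟩ := Finset.exists_of_ssubset (Finset.ssubset_iff_subset_ne.mpr ⟨hA, h⟩)
      exact Finset.prod_eq_zero hv (by simp [hvA])
  · rw [if_neg (by rintro rfl; exact hA le_rfl)]
    refine Finset.sum_eq_zero fun S hS => ?_
    rw [if_neg fun h => hA (h.trans (Finset.mem_powerset.mp hS)), mul_zero]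

end degreeLE

/-! ## Iterated derivatives of a product of polynomials in few variables -/

section derivatives

variable {V F : Type*} [Field F]

/-- The iterated partial derivative along a list of variables. -/
noncomputable def iterPderiv (L : List V) (p : MvPolynomial V F) : MvPolynomial V F :=
  L.foldr (fun v q => pderiv v q) p

theorem iterPderiv_sum {ι : Type*} (L : List V) (s : Finset ι) (p : ι → MvPolynomial V F) :
    iterPderiv L (∑ i ∈ s, p i) = ∑ i ∈ s, iterPderiv L (p i) := by
  induction L with
  | nil => rfl
  | cons v L ih =>
    change pderiv v (iterPderiv L _) = ∑ i ∈ s, pderiv v (iterPderiv L _)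
    rw [ih, map_sum]

theorem iterPderiv_zero (L : List V) : iterPderiv L (0 : MvPolynomial V F) = 0 := by
  simpa using iterPderiv_sum L ∅ (fun _ : ℕ => (0 : MvPolynomial V F))

theorem pderiv_mem_supported {s : Set V} {p : MvPolynomial V F} (hp : p ∈ supported F s) (v : V) :
    pderiv v p ∈ supported F s := by
  rw [supported_eq_adjoin_X] at hp ⊢
  induction hp using Algebra.adjoin_induction with
  | mem p hp =>
    obtain ⟨w, hw, rfl⟩ := hp
    by_cases h : w = v
    · subst h; rw [pderiv_X_self]; exact one_mem _
    · rw [pderiv_X_of_ne h]; exact zero_mem _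
  | algebraMap c => rw [algebraMap_eq, pderiv_C]; exact zero_mem _
  | add p q _ _ hp hq => rw [map_add]; exact add_mem hp hq
  | mul p q hp' hq' hp hq =>
    rw [pderiv_mul]
    exact add_mem (mul_mem hp hq') (mul_mem hp' hq)

theorem pderiv_finset_prod {ι : Type*} [DecidableEq ι] (v : V) (s : Finset ι)
    (p : ι → MvPolynomial V F) :
    pderiv v (∏ i ∈ s, p i) = ∑ i ∈ s, (∏ j ∈ s.erase i, p j) * pderiv v (p i) := by
  induction s using Finset.induction_on with
  | empty => simp
  | insert a s ha ih =>
    rw [Finset.prod_insert ha, pderiv_mul, ih, Finset.sum_insert ha, Finset.erase_insert ha,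
      Finset.mul_sum, mul_comm (pderiv v (p a))]
    congr 1
    refine Finset.sum_congr rfl fun i hi => ?_
    have hia : a ≠ i := by rintro rfl; exact ha hi
    rw [Finset.erase_insert_of_ne hia, Finset.prod_insert (by simp [ha]), mul_assoc]

variable [DecidableEq V] {d : ℕ}

/-- Polynomials obtained from `∏ j, R j` by replacing at most `k` of the factors by an arbitrary
polynomial in the variables of these factors. -/
noncomputable def productSpace (R : Fin d → MvPolynomial V F) (k : ℕ) :
    Submodule F (MvPolynomial V F) :=
  Submodule.span F {p | ∃ J : Finset (Fin d), J.card ≤ k ∧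
    ∃ g ∈ supported F ((J.biUnion fun j => (R j).vars : Finset V) : Set V),
      p = (∏ j ∈ Jᶜ, R j) * g}

theorem pderiv_mem_productSpace {R : Fin d → MvPolynomial V F} {k : ℕ} {p : MvPolynomial V F}
    (hp : p ∈ productSpace R k) (v : V) : pderiv v p ∈ productSpace R (k + 1) := by
  induction hp using Submodule.span_induction with
  | mem p hp =>
    obtain ⟨J, hJ, g, hg, rfl⟩ := hp
    rw [pderiv_mul, pderiv_finset_prod, Finset.sum_mul]
    refine add_mem (sum_mem fun i hi => Submodule.subset_span ?_) (Submodule.subset_span ?_)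
    · refine ⟨insert i J, (Finset.card_insert_le _ _).trans (by omega), pderiv v (R i) * g, ?_, ?_⟩
      · refine mul_mem (pderiv_mem_supported ?_ v) (supported_mono ?_ hg)
        · refine supported_mono ?_ (mem_supported_vars (R i))
          exact_mod_cast Finset.subset_biUnion_of_mem (fun j => (R j).vars)
            (Finset.mem_insert_self i J)
        · exact_mod_cast Finset.biUnion_subset_biUnion_of_subset_left _ (Finset.subset_insert i J)
      · rw [mul_assoc, Finset.compl_insert]
    · exact ⟨J, hJ.trans (Nat.le_succ k), pderiv v g, pderiv_mem_supported hg v, rfl⟩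
  | zero => simp
  | add p q _ _ hp hq => rw [map_add]; exact add_mem hp hq
  | smul c p _ hp => rw [Derivation.map_smul]; exact Submodule.smul_mem _ _ hp

theorem iterPderiv_mem_productSpace (R : Fin d → MvPolynomial V F) (L : List V) :
    iterPderiv L (∏ j, R j) ∈ productSpace R L.length := by
  induction L with
  | nil => exact Submodule.subset_span ⟨∅, by simp, 1, one_mem _, by simp [iterPderiv]⟩
  | cons v L ih => exact pderiv_mem_productSpace ih v

/-- The vertex `S` of the unit cube, translated by `b`. -/
def cubePoint (b : V → F) (S : Finset V) : V → F := fun v => b v + if v ∈ S then 1 else 0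

theorem eval_cubePoint_congr {b : V → F} {p : MvPolynomial V F} {U S S' : Finset V}
    (hp : p.vars ⊆ U) (h : S ∩ U = S' ∩ U) :
    eval (cubePoint b S) p = eval (cubePoint b S') p := by
  refine eval₂Hom_congr' rfl (fun v hv _ => ?_) rfl
  have := Finset.ext_iff.mp h v
  simp only [Finset.mem_inter, hp hv, and_true] at this
  simp [cubePoint, this]

theorem eval_productSpace {R : Fin d → MvPolynomial V F} {r k : ℕ}
    (hr : ∀ j, (R j).vars.card ≤ r) {b : V → F}
    (hb : ∀ j S, eval (cubePoint b S) (R j) ≠ 0) {p : MvPolynomial V F}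
    (hp : p ∈ productSpace R k) :
    ∃ h ∈ degreeLE F (k * r), ∀ S, eval (cubePoint b S) p =
      eval (cubePoint b S) (∏ j, R j) * h S := by
  induction hp using Submodule.span_induction with
  | mem p hp =>
    obtain ⟨J, hJ, g, hg, rfl⟩ := hp
    have hg' := mem_supported.mp hg
    set U := J.biUnion fun j => (R j).vars with hU
    have hUc : U.card ≤ k * r :=
      (Finset.card_biUnion_le_card_mul _ _ r fun j _ => hr j).trans (Nat.mul_le_mul_right r hJ)
    refine ⟨fun S => eval (cubePoint b S) g / ∏ j ∈ J, eval (cubePoint b S) (R j),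
      degreeLE_mono hUc (mem_degreeLE_of_inter U _ fun S S' h => ?_), fun S => ?_⟩
    · rw [eval_cubePoint_congr (by exact_mod_cast hg') h]
      congr 1
      refine Finset.prod_congr rfl fun j hj => eval_cubePoint_congr ?_ h
      exact Finset.subset_biUnion_of_mem (fun j => (R j).vars) hj
    · have h0 : ∏ j ∈ J, eval (cubePoint b S) (R j) ≠ 0 :=
        Finset.prod_ne_zero_iff.mpr fun j _ => hb j S
      rw [← Finset.prod_compl_mul_prod J]
      simp only [map_mul, map_prod]
      field_simp
  | zero => exact ⟨0, zero_mem _, by simp⟩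
  | add p q _ _ hp hq =>
    obtain ⟨f, hf, hf'⟩ := hp
    obtain ⟨g, hg, hg'⟩ := hq
    exact ⟨f + g, add_mem hf hg, fun S => by simp [hf', hg', mul_add]⟩
  | smul c p _ hp =>
    obtain ⟨f, hf, hf'⟩ := hp
    exact ⟨c • f, Submodule.smul_mem _ _ hf, fun S => by simp [hf', mul_left_comm]⟩

/-- If `∑ i, ∏ j, R i j` has factors in at most `r` variables, then, at a suitable translate `b`,
its shifted partial derivatives span a space of small dimension. -/
theorem exists_shift_card_le [Fintype V] [Infinite F] {T r k : ℕ}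
    (R : Fin T → Fin d → MvPolynomial V F) (hr : ∀ i j, (R i j).vars.card ≤ r) :
    ∃ b : V → F, ∀ (ℓ : ℕ) {ι : Type} [Fintype ι] (L : ι → List V) (B : ι → Finset V),
      (∀ e, (L e).length = k) → (∀ e, (B e).card ≤ ℓ) →
      LinearIndependent F (fun e : ι => upIndicator F (B e) *
        fun S => eval (cubePoint b S) (iterPderiv (L e) (∑ i, ∏ j, R i j))) →
      Fintype.card ι ≤ T * (Finset.univ.filter fun A : Finset V => A.card ≤ ℓ + k * r).card := by
  classical
  have hshift : ∃ b : V → F, ∀ i j, R i j ≠ 0 → ∀ S, eval (cubePoint b S) (R i j) ≠ 0 := by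
    let tr : Finset V → MvPolynomial V F → MvPolynomial V F := fun S p =>
      aeval (fun v => X v + C (if v ∈ S then (1 : F) else 0)) p
    have htr : ∀ b S p, eval b (tr S p) = eval (cubePoint b S) p := by
      intro b S p
      simp only [tr, aeval_def, eval₂_eq_eval_map]
      rw [← eval₂_eq_eval_map, algebraMap_eq, ← coe_eval₂Hom, ← RingHom.comp_apply]
      congr 1
      refine ringHom_ext (by simp) fun v => by simp [cubePoint]
    have hne : ∀ S p, p ≠ 0 → tr S p ≠ 0 := by
      intro S p hp h
      refine hp (MvPolynomial.funext fun x => ?_)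
      have := htr (fun v => x v - if v ∈ S then (1 : F) else 0) S p
      rw [h] at this
      rw [map_zero] at this ⊢
      rw [this]
      congr 2
      funext v; simp [cubePoint]
    let q : MvPolynomial V F := ∏ i, ∏ j, if R i j = 0 then 1 else ∏ S, tr S (R i j)
    have hq : q ≠ 0 := by
      refine Finset.prod_ne_zero_iff.mpr fun i _ => Finset.prod_ne_zero_iff.mpr fun j _ => ?_
      split_ifs with h
      · exact one_ne_zero
      · exact Finset.prod_ne_zero_iff.mpr fun S _ => hne S _ h
    obtain ⟨b, hb⟩ : ∃ b, eval b q ≠ 0 := by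
      by_contra! h
      exact hq (MvPolynomial.funext fun x => by simpa using h x)
    refine ⟨b, fun i j hij S => ?_⟩
    rw [map_prod] at hb
    have h1 := Finset.prod_ne_zero_iff.mp hb i (Finset.mem_univ _)
    rw [map_prod] at h1
    have h2 := Finset.prod_ne_zero_iff.mp h1 j (Finset.mem_univ _)
    rw [if_neg hij, map_prod] at h2
    rw [← htr]
    exact Finset.prod_ne_zero_iff.mp h2 S (Finset.mem_univ _)
  obtain ⟨b, hb⟩ := hshift
  refine ⟨b, fun ℓ ι _ L B hL hB hli => ?_⟩
  let 𝒜 := Finset.univ.filter fun A : Finset V => A.card ≤ ℓ + k * r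
  let w : Fin T × Finset V → Finset V → F := fun x =>
    (fun S => eval (cubePoint b S) (∏ j, R x.1 j)) * upIndicator F x.2
  let s : Finset (Finset V → F) := ((Finset.univ : Finset (Fin T)) ×ˢ 𝒜).image w
  have hs : s.card ≤ T * 𝒜.card :=
    Finset.card_image_le.trans (by rw [Finset.card_product]; simp)
  refine le_trans ?_ hs
  have hspan : Set.range (fun e : ι => upIndicator F (B e) *
        fun S => eval (cubePoint b S) (iterPderiv (L e) (∑ i, ∏ j, R i j))) ⊆
      Submodule.span F (s : Set (Finset V → F)) := by
    rintro _ ⟨e, rfl⟩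
    have hsum : (upIndicator F (B e) *
        fun S => eval (cubePoint b S) (iterPderiv (L e) (∑ i, ∏ j, R i j))) =
        ∑ i, upIndicator F (B e) *
          fun S => eval (cubePoint b S) (iterPderiv (L e) (∏ j, R i j)) := by
      rw [iterPderiv_sum, ← Finset.mul_sum]
      congr 1
      funext S
      simp [Finset.sum_apply]
    simp only [SetLike.mem_coe]
    rw [hsum]
    refine sum_mem fun i _ => ?_
    by_cases h0 : ∃ j, R i j = 0
    · obtain ⟨j, hj⟩ := h0
      rw [Finset.prod_eq_zero (Finset.mem_univ j) hj, iterPderiv_zero]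
      have : (upIndicator F (B e) * fun S => eval (cubePoint b S) (0 : MvPolynomial V F)) = 0 := by
        funext S; simp
      rw [this]; exact zero_mem _
    · push Not at h0
      obtain ⟨h, hh, hh'⟩ := eval_productSpace (hr i) (fun j => hb i j (h0 j))
        (iterPderiv_mem_productSpace (R i) (L e))
      rw [hL e] at hh
      have hmem := upIndicator_mul_mem (hB e) hh
      have heq : (upIndicator F (B e) *
          fun S => eval (cubePoint b S) (iterPderiv (L e) (∏ j, R i j))) =
          (fun S => eval (cubePoint b S) (∏ j, R i j)) * (upIndicator F (B e) * h) := by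
        funext S
        simp only [Pi.mul_apply, hh']
        ring
      rw [heq]
      generalize upIndicator F (B e) * h = f at hmem
      induction hmem using Submodule.span_induction with
      | mem f hf =>
        obtain ⟨A, hA, rfl⟩ := hf
        refine Submodule.subset_span ?_
        simp only [s, Finset.coe_image]
        exact ⟨(i, A), by simpa [𝒜] using hA, rfl⟩
      | zero => simp
      | add f g _ _ hf hg => rw [mul_add]; exact add_mem hf hg
      | smul c f _ hf => rw [mul_smul_comm]; exact Submodule.smul_mem _ _ hf
  have := linearIndependent_le_span' _ hli (s : Set (Finset V → F)) hspan
  simpa using this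

end derivatives

/-! ## Set-multilinear polynomials -/

section setMultilinear

variable {n m : ℕ} {F : Type*} [Field F]

/-- The variables chosen by `a` in the rows outside `K`. -/
def rowVars (K : Finset (Fin n)) (a : Fin n → Fin m) : Finset (Fin n × Fin m) :=
  Kᶜ.image fun i => (i, a i)

theorem card_rowVars (K : Finset (Fin n)) (a : Fin n → Fin m) : (rowVars K a).card = Kᶜ.card :=
  Finset.card_image_of_injective _ fun _ _ h => (Prod.mk.inj h).1

theorem mem_rowVars {K : Finset (Fin n)} {a : Fin n → Fin m} {v : Fin n × Fin m} :
    v ∈ rowVars K a ↔ v.1 ∉ K ∧ v.2 = a v.1 := by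
  obtain ⟨i, c⟩ := v
  simp only [rowVars, Finset.mem_image, Finset.mem_compl, Prod.mk.injEq]
  constructor
  · rintro ⟨j, hj, rfl, rfl⟩; exact ⟨hj, rfl⟩
  · rintro ⟨h, rfl⟩; exact ⟨i, h, rfl, rfl⟩

theorem iterPderiv_rows (a c : Fin n → Fin m) (L : List (Fin n)) (hL : L.Nodup) :
    iterPderiv (L.map fun i => (i, a i)) (∏ i, X (i, c i) : MvPolynomial (Fin n × Fin m) F) =
      if ∀ i ∈ L, c i = a i then ∏ i ∈ L.toFinsetᶜ, X (i, c i) else 0 := by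
  induction L with
  | nil => simp [iterPderiv]
  | cons i L ih =>
    obtain ⟨hi, hL⟩ := List.nodup_cons.mp hL
    change pderiv (i, a i) (iterPderiv (L.map fun i => (i, a i)) _) = _
    rw [ih hL]
    by_cases h : ∀ j ∈ L, c j = a j
    · have hmem : i ∈ L.toFinsetᶜ := by simpa using hi
      rw [if_pos h, pderiv_finset_prod, Finset.sum_eq_single_of_mem i hmem]
      · by_cases hci : c i = a i
        · rw [if_pos (by simpa [hci] using h), hci, pderiv_X_self, mul_one, List.toFinset_cons,
            Finset.compl_insert]
        · rw [if_neg (by simp [hci]), pderiv_X_of_ne (by simp [hci]), mul_zero]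
      · intro j _ hj
        rw [pderiv_X_of_ne (by simp [hj]), mul_zero]
    · have h' : ¬ ∀ j ∈ i :: L, c j = a j := fun h' => h fun j hj => h' j (List.mem_cons_of_mem _ hj)
      rw [if_neg h, if_neg h', map_zero]

theorem topCoeff_rows (K : Finset (Fin n)) (c : Fin n → Fin m) (b : Fin n × Fin m → F)
    (β γ : Finset (Fin n × Fin m)) (hγ : γ.card = β.card + Kᶜ.card) :
    topCoeff F γ (upIndicator F β * fun S => eval (cubePoint b S) (∏ i ∈ Kᶜ, X (i, c i))) =
      if β ∪ rowVars K c = γ then 1 else 0 := by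
  have hexp : (upIndicator F β * fun S => eval (cubePoint b S) (∏ i ∈ Kᶜ, X (i, c i))) =
      ∑ Z ∈ Kᶜ.powerset, (∏ i ∈ Kᶜ \ Z, b (i, c i)) •
        upIndicator F (β ∪ Z.image fun i => (i, c i)) := by
    funext S
    simp only [← upIndicator_mul, Pi.mul_apply, Finset.sum_apply, Pi.smul_apply, smul_eq_mul,
      map_prod, eval_X, cubePoint]
    simp only [add_comm (b _)]
    rw [Finset.prod_add, Finset.mul_sum]
    refine Finset.sum_congr rfl fun Z _ => ?_
    have : ∏ i ∈ Z, (if (i, c i) ∈ S then (1 : F) else 0) =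
        upIndicator F (Z.image fun i => (i, c i)) S := by
      rw [Finset.prod_boole, upIndicator]
      simp [Finset.image_subset_iff]
    rw [this]
    ring
  rw [hexp, map_sum, Finset.sum_eq_single_of_mem Kᶜ (by simp)]
  · rw [map_smul, topCoeff_upIndicator, Finset.sdiff_self, Finset.prod_empty, one_smul]
    exact if_congr Iff.rfl rfl rfl
  · intro Z hZ hne
    rw [map_smul, topCoeff_upIndicator, if_neg, smul_zero]
    intro h
    have h1 : Z.card < Kᶜ.card :=
      Finset.card_lt_card (Finset.ssubset_iff_subset_ne.mpr ⟨Finset.mem_powerset.mp hZ, hne⟩)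
    have h2 := Finset.card_union_le β (Z.image fun i => (i, c i))
    have h3 : (Z.image fun i => (i, c i)).card ≤ Z.card := Finset.card_image_le
    rw [h] at h2
    omega

/-- The polynomial whose monomials are the set-multilinear monomials in `𝒞`. -/
noncomputable def codePoly (F : Type*) [Field F] (𝒞 : Finset (Fin n → Fin m)) :
    MvPolynomial (Fin n × Fin m) F :=
  ∑ a ∈ 𝒞, ∏ i, X (i, a i)

/-- `b` conflicts with the monomial `a` shifted by `β`: either `b` also occurs in the same shifted
derivative, or it divides the shifted monomial. -/
def Conflict (K : Finset (Fin n)) (a b : Fin n → Fin m) (β : Finset (Fin n × Fin m)) : Prop :=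
  ((∀ i ∈ K, b i = a i) ∧ Disjoint β (rowVars K b)) ∨ rowVars K b \ rowVars K a ⊆ β

theorem card_conflictFree_le [Infinite F] {T d r : ℕ} (K : Finset (Fin n))
    (𝒞 : Finset (Fin n → Fin m)) (R : Fin T → Fin d → MvPolynomial (Fin n × Fin m) F)
    (hr : ∀ i j, (R i j).vars.card ≤ r) (hR : codePoly F 𝒞 = ∑ i, ∏ j, R i j) (ℓ : ℕ)
    (E : Finset ((Fin n → Fin m) × Finset (Fin n × Fin m)))
    (hE : ∀ e ∈ E, e.1 ∈ 𝒞 ∧ e.2.card = ℓ ∧ Disjoint e.2 (rowVars K e.1) ∧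
      ∀ b ∈ 𝒞, b ≠ e.1 → ¬ Conflict K e.1 b e.2) :
    E.card ≤ T * (Finset.univ.filter fun A : Finset (Fin n × Fin m) =>
      A.card ≤ ℓ + K.card * r).card := by
  obtain ⟨b, hb⟩ := exists_shift_card_le (k := K.card) R hr
  have h := hb ℓ (ι := E) (fun e => K.toList.map fun i => (i, e.1.1 i)) (fun e => e.1.2)
    (by simp) (fun e => (hE e.1 e.2).2.1.le)
  rw [Fintype.card_coe] at h
  refine h ?_
  rw [← hR]
  have hval : ∀ (e : (Fin n → Fin m) × Finset (Fin n × Fin m)) (γ : Finset (Fin n × Fin m)),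
      γ.card = e.2.card + Kᶜ.card →
      topCoeff F γ (upIndicator F e.2 * fun S => eval (cubePoint b S)
        (iterPderiv (K.toList.map fun i => (i, e.1 i)) (codePoly F 𝒞))) =
      ∑ c ∈ 𝒞, if (∀ i ∈ K, c i = e.1 i) ∧ e.2 ∪ rowVars K c = γ then 1 else 0 := by
    intro e γ hγ
    have hsum : (upIndicator F e.2 * fun S => eval (cubePoint b S)
        (iterPderiv (K.toList.map fun i => (i, e.1 i)) (codePoly F 𝒞))) =
        ∑ c ∈ 𝒞, upIndicator F e.2 * fun S => eval (cubePoint b S)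
          (iterPderiv (K.toList.map fun i => (i, e.1 i)) (∏ i, X (i, c i))) := by
      rw [codePoly, iterPderiv_sum, ← Finset.mul_sum]
      congr 1
      funext S
      simp [Finset.sum_apply]
    rw [hsum, map_sum]
    refine Finset.sum_congr rfl fun c _ => ?_
    rw [iterPderiv_rows _ _ _ K.nodup_toList]
    simp only [Finset.mem_toList, Finset.toList_toFinset]
    by_cases hc : ∀ i ∈ K, c i = e.1 i
    · rw [if_pos hc, topCoeff_rows K c b e.2 γ hγ]
      exact if_congr ⟨fun h => ⟨hc, h⟩, And.right⟩ rfl rfl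
    · rw [if_neg hc, if_neg fun h => hc h.1]
      have : (upIndicator F e.2 * fun S =>
          eval (cubePoint b S) (0 : MvPolynomial (Fin n × Fin m) F)) = 0 := by
        funext S; simp
      rw [this, map_zero]
  have hcard : ∀ e ∈ E, (e.2 ∪ rowVars K e.1).card = ℓ + Kᶜ.card := fun e he => by
    rw [Finset.card_union_of_disjoint (hE e he).2.2.1, (hE e he).2.1, card_rowVars]
  have hone : ∀ e ∈ E, ∀ c ∈ 𝒞, ∀ β, β ∪ rowVars K c = e.2 ∪ rowVars K e.1 → c = e.1 := by
    intro e he c hc β h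
    by_contra hne
    refine (hE e he).2.2.2 c hc hne (Or.inr fun v hv => ?_)
    obtain ⟨h1, h2⟩ := Finset.mem_sdiff.mp hv
    have : v ∈ e.2 ∪ rowVars K e.1 := h ▸ Finset.mem_union_right _ h1
    exact (Finset.mem_union.mp this).resolve_right h2
  refine LinearIndependent.of_comp
    (LinearMap.pi fun e : E => topCoeff F (e.1.2 ∪ rowVars K e.1.1)) ?_
  classical
  have hpi : LinearIndependent F fun e : E => (Pi.single e 1 : E → F) :=
    Pi.linearIndependent_single_one E F
  rwa [← show (LinearMap.pi fun e : E => topCoeff F (e.1.2 ∪ rowVars K e.1.1)) ∘ _ =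
    fun e : E => (Pi.single e 1 : E → F) from ?_] at hpi
  funext ⟨e', he'⟩ ⟨e, he⟩
  simp only [Function.comp_apply, LinearMap.pi_apply]
  rw [hval e' _ (by rw [hcard e he, (hE e' he').2.1])]
  by_cases hee : e = e'
  · subst hee
    rw [Pi.single_eq_same, Finset.sum_eq_single_of_mem e.1 (hE e he).1]
    · simp
    · intro c hc hne
      exact if_neg fun h => hne (hone e he c hc _ h.2)
  · rw [Pi.single_eq_of_ne (by simpa using hee)]
    refine Finset.sum_eq_zero fun c hc => if_neg fun ⟨hK, h⟩ => hee ?_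
    have hce := hone e he c hc _ h
    subst hce
    have hdisj : Disjoint e'.2 (rowVars K e.1) := by
      rw [← Finset.card_union_eq_card_add_card, h, hcard e he, (hE e' he').2.1, card_rowVars]
    have h1 : e.1 = e'.1 := by
      by_contra hne
      exact (hE e' he').2.2.2 e.1 hc hne (Or.inl ⟨hK, hdisj⟩)
    refine Prod.ext h1 ?_
    have h2 := congrArg (· \ rowVars K e.1) h
    simp only [Finset.union_sdiff_right] at h2
    rw [Finset.sdiff_eq_self_of_disjoint hdisj,
      Finset.sdiff_eq_self_of_disjoint (hE e he).2.2.1] at h2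
    exact h2.symm

end setMultilinear

/-! ## Random restrictions of a Reed–Solomon code -/

section randomCode

variable {n m D ψ : ℕ}

/-- The evaluation at `i` of the polynomial with coefficients `c`. -/
def codeEval (c : Fin D → ZMod ψ) (i : Fin n) : ZMod ψ :=
  ∑ k, c k * ((i : ℕ) : ZMod ψ) ^ (k : ℕ)

variable [Fact ψ.Prime]

theorem codeEval_injOn (hnψ : n ≤ ψ) (J : Finset (Fin n)) (hJ : J.card = D) :
    Function.Injective fun (c : Fin D → ZMod ψ) (i : J) => codeEval c (i : Fin n) := by
  intro c c' h
  set p : Polynomial (ZMod ψ) :=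
    ∑ k : Fin D, Polynomial.C (c k - c' k) * Polynomial.X ^ (k : ℕ) with hp
  have hcoeff : ∀ k : Fin D, p.coeff k = c k - c' k := by
    intro k
    simp only [hp, Polynomial.finsetSum_coeff, Polynomial.coeff_C_mul, Polynomial.coeff_X_pow]
    simp [Fin.val_inj]
  have hcast : Set.InjOn (fun i : Fin n => ((i : ℕ) : ZMod ψ)) (J : Set (Fin n)) := by
    intro i _ j _ hij
    have := (ZMod.natCast_eq_natCast_iff' _ _ _).mp hij
    rw [Nat.mod_eq_of_lt (i.2.trans_le hnψ), Nat.mod_eq_of_lt (j.2.trans_le hnψ)] at this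
    exact Fin.ext this
  have hzero : p = 0 := by
    refine Polynomial.eq_zero_of_degree_lt_of_eval_finset_eq_zero
      (J.image fun i : Fin n => ((i : ℕ) : ZMod ψ)) ?_ ?_
    · rw [Finset.card_image_of_injOn hcast, hJ]
      refine (Polynomial.degree_lt_iff_coeff_zero _ _).mpr fun l hl => ?_
      simp only [hp, Polynomial.finsetSum_coeff, Polynomial.coeff_C_mul, Polynomial.coeff_X_pow]
      refine Finset.sum_eq_zero fun k _ => ?_
      rw [if_neg (by omega), mul_zero]
    · intro z hz
      obtain ⟨i, hi, rfl⟩ := Finset.mem_image.mp hz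
      have := congrFun h ⟨i, hi⟩
      simp only [codeEval] at this
      simp [hp, Polynomial.eval_finsetSum, sub_mul, this]
  funext k
  have := hcoeff k
  rw [hzero, Polynomial.coeff_zero] at this
  exact (sub_eq_zero.mp this.symm)

theorem codeEval_injective (hDn : D ≤ n) (hnψ : n ≤ ψ) :
    Function.Injective fun (c : Fin D → ZMod ψ) (i : Fin n) => codeEval c i := by
  obtain ⟨J, -, hJ⟩ := Finset.exists_subset_card_eq (s := (Finset.univ : Finset (Fin n)))
    (n := D) (by simpa using hDn)
  intro c c' h
  exact codeEval_injOn hnψ J hJ (funext fun i => congrFun h i)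

theorem card_codeEval_mem (hDn : D ≤ n) (hnψ : n ≤ ψ) (J : Finset (Fin n)) (hJ : J.card ≤ D)
    (W : Fin n → Finset (ZMod ψ)) :
    ((Finset.univ.filter fun c : Fin D → ZMod ψ => ∀ i ∈ J, codeEval c i ∈ W i).card : ℝ) =
      ψ ^ D * ∏ i ∈ J, ((W i).card : ℝ) / ψ := by
  have hψ : (ψ : ℝ) ≠ 0 := Nat.cast_ne_zero.mpr (Fact.out : ψ.Prime).ne_zero
  obtain ⟨J', hJJ', -, hJ'⟩ := Finset.exists_subsuperset_card_eq (Finset.subset_univ J) hJ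
    (by simpa using hDn)
  have hbij : Function.Bijective fun (c : Fin D → ZMod ψ) (i : J') => codeEval c (i : Fin n) :=
    (Fintype.bijective_iff_injective_and_card _).mpr
      ⟨codeEval_injOn hnψ J' hJ', by simp [hJ']⟩
  have hcard : (Finset.univ.filter fun c : Fin D → ZMod ψ => ∀ i ∈ J, codeEval c i ∈ W i).card =
      (Fintype.piFinset fun i : J' => if (i : Fin n) ∈ J then W i else Finset.univ).card := by
    refine Finset.card_bij (fun c _ (i : J') => codeEval c (i : Fin n)) ?_
      (fun c _ c' _ h => hbij.1 h) ?_
    · intro c hc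
      rw [Fintype.mem_piFinset]
      intro i
      split_ifs with hi
      · exact (Finset.mem_filter.mp hc).2 i hi
      · exact Finset.mem_univ _
    · intro g hg
      obtain ⟨c, rfl⟩ := hbij.2 g
      refine ⟨c, Finset.mem_filter.mpr ⟨Finset.mem_univ _, fun i hi => ?_⟩, rfl⟩
      have := Fintype.mem_piFinset.mp hg ⟨i, hJJ' hi⟩
      simpa [hi] using this
  rw [hcard, Fintype.card_piFinset, Nat.cast_prod,
    Finset.prod_coe_sort J' fun i => (((if i ∈ J then W i else Finset.univ).card : ℕ) : ℝ)]
  have : ∀ i ∈ J', (((if i ∈ J then W i else Finset.univ).card : ℕ) : ℝ) =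
      ψ * if i ∈ J then ((W i).card : ℝ) / ψ else 1 := by
    intro i _
    split_ifs
    · field_simp
    · simp
  rw [Finset.prod_congr rfl this, Finset.prod_mul_distrib, Finset.prod_const, hJ',
    Finset.prod_ite_mem, Finset.inter_eq_right.mpr hJJ']

theorem card_forall_mem {V : Type*} [Fintype V] [DecidableEq V] (S U : Finset V)
    (hSU : Disjoint S U) (τ : V → ZMod ψ) (W : V → Finset (ZMod ψ)) :
    ((Finset.univ.filter fun σ : V → ZMod ψ =>
      (∀ v ∈ S, σ v = τ v) ∧ ∀ v ∈ U, σ v ∈ W v).card : ℝ) =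
      ψ ^ Fintype.card V * (1 / ψ) ^ S.card * ∏ v ∈ U, ((W v).card : ℝ) / ψ := by
  have hψ : (ψ : ℝ) ≠ 0 := Nat.cast_ne_zero.mpr (Fact.out : ψ.Prime).ne_zero
  have hset : (Finset.univ.filter fun σ : V → ZMod ψ =>
      (∀ v ∈ S, σ v = τ v) ∧ ∀ v ∈ U, σ v ∈ W v) =
      Fintype.piFinset fun v => if v ∈ S then {τ v} else if v ∈ U then W v else Finset.univ := by
    ext σ
    simp only [Finset.mem_filter, Finset.mem_univ, true_and, Fintype.mem_piFinset]
    constructor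
    · rintro ⟨h1, h2⟩ v
      split_ifs with hS hU
      · exact Finset.mem_singleton.mpr (h1 v hS)
      · exact h2 v hU
      · exact Finset.mem_univ _
    · intro h
      refine ⟨fun v hv => ?_, fun v hv => ?_⟩
      · simpa [hv] using h v
      · simpa [hv, Finset.disjoint_right.mp hSU hv] using h v
  rw [hset, Fintype.card_piFinset, Nat.cast_prod]
  have : ∀ v ∈ (Finset.univ : Finset V),
      (((if v ∈ S then {τ v} else if v ∈ U then W v else Finset.univ).card : ℕ) : ℝ) =
      ψ * (if v ∈ S then 1 / (ψ : ℝ) else 1) * if v ∈ U then ((W v).card : ℝ) / ψ else 1 := by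
    intro v _
    by_cases hS : v ∈ S
    · simp [hS, Finset.disjoint_left.mp hSU hS, hψ]
    · by_cases hU : v ∈ U
      · simp only [hS, hU, if_true, if_false]
        field_simp
      · simp [hS, hU]
  rw [Finset.prod_congr rfl this, Finset.prod_mul_distrib, Finset.prod_mul_distrib,
    Finset.prod_const, Finset.prod_ite_mem, Finset.prod_ite_mem, Finset.univ_inter,
    Finset.univ_inter, Finset.prod_const, Finset.card_univ]

end randomCode

section restrictedCode

variable {n m D ψ : ℕ}

theorem card_rowVars_sdiff (K : Finset (Fin n)) (a b : Fin n → Fin m) :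
    (rowVars K b \ rowVars K a).card = (Kᶜ.filter fun i => b i ≠ a i).card := by
  have : rowVars K b \ rowVars K a = (Kᶜ.filter fun i => b i ≠ a i).image fun i => (i, b i) := by
    ext ⟨i, c⟩
    simp only [Finset.mem_sdiff, mem_rowVars, Finset.mem_image, Finset.mem_filter,
      Finset.mem_compl, Prod.mk.injEq]
    constructor
    · rintro ⟨⟨h1, rfl⟩, h2⟩
      exact ⟨i, ⟨h1, fun h => h2 ⟨h1, h⟩⟩, rfl, rfl⟩
    · rintro ⟨j, ⟨h1, h2⟩, rfl, rfl⟩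
      exact ⟨⟨h1, rfl⟩, fun h => h2 h.2⟩
  rw [this]
  exact Finset.card_image_of_injective _ fun _ _ h => (Prod.mk.inj h).1

variable [Fact ψ.Prime]

/-- The words `a` for which the values of `σ` along `a` form a codeword. -/
def restrictedCode (D : ℕ) (σ : Fin n × Fin m → ZMod ψ) : Finset (Fin n → Fin m) :=
  Finset.univ.filter fun a => ∃ c : Fin D → ZMod ψ, ∀ i, codeEval c i = σ (i, a i)

theorem mem_restrictedCode {σ : Fin n × Fin m → ZMod ψ} {a : Fin n → Fin m} :
    a ∈ restrictedCode D σ ↔ ∃ c : Fin D → ZMod ψ, ∀ i, codeEval c i = σ (i, a i) := by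
  simp [restrictedCode]

theorem card_mem_restrictedCode (hDn : D ≤ n) (hnψ : n ≤ ψ) (a : Fin n → Fin m) :
    ((Finset.univ.filter fun σ : Fin n × Fin m → ZMod ψ => a ∈ restrictedCode D σ).card : ℝ) =
      ψ ^ Fintype.card (Fin n × Fin m) * (ψ ^ D * (1 / ψ) ^ n) := by
  have hset : (Finset.univ.filter fun σ : Fin n × Fin m → ZMod ψ => a ∈ restrictedCode D σ) =
      (Finset.univ : Finset (Fin D → ZMod ψ)).biUnion fun c =>
        Finset.univ.filter fun σ : Fin n × Fin m → ZMod ψ =>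
          (∀ v ∈ rowVars ∅ a, σ v = codeEval c v.1) ∧
            ∀ v ∈ (∅ : Finset (Fin n × Fin m)), σ v ∈ (∅ : Finset (ZMod ψ)) := by
    ext σ
    simp only [Finset.mem_filter, Finset.mem_univ, true_and, mem_restrictedCode,
      Finset.mem_biUnion]
    refine exists_congr fun c => ⟨fun h => ⟨fun ⟨i, j⟩ hv => ?_, by simp⟩, fun h i => ?_⟩
    · obtain rfl : j = a i := (mem_rowVars.mp hv).2
      exact (h i).symm
    · exact (h.1 (i, a i) (mem_rowVars.mpr ⟨Finset.notMem_empty _, rfl⟩)).symm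
  rw [hset, Finset.card_biUnion, Nat.cast_sum]
  · simp_rw [card_forall_mem (rowVars ∅ a) ∅ (Finset.disjoint_empty_right _)
      (fun v => codeEval _ v.1) fun _ => ∅]
    rw [card_rowVars]
    simp [ZMod.card]
    ring
  · intro c _ c' _ hne
    rw [Function.onFun, Finset.disjoint_left]
    intro σ h h'
    refine hne (codeEval_injective hDn hnψ (funext fun i => ?_))
    have hi : (i, a i) ∈ rowVars ∅ a := mem_rowVars.mpr ⟨Finset.notMem_empty _, rfl⟩
    exact ((Finset.mem_filter.mp h).2.1 _ hi).symm.trans ((Finset.mem_filter.mp h').2.1 _ hi)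

theorem card_mem_restrictedCode_inter_le (hDn : D ≤ n) (hnψ : n ≤ ψ) (a b : Fin n → Fin m) :
    ((Finset.univ.filter fun σ : Fin n × Fin m → ZMod ψ =>
      a ∈ restrictedCode D σ ∧ b ∈ restrictedCode D σ).card : ℝ) ≤
      ψ ^ Fintype.card (Fin n × Fin m) * (ψ ^ D * (1 / ψ) ^ n) *
        (ψ ^ D * (1 / ψ) ^ n + (1 / ψ) ^ (Finset.univ.filter fun i => b i ≠ a i).card) := by
  have hψ : (ψ : ℝ) ≠ 0 := Nat.cast_ne_zero.mpr (Fact.out : ψ.Prime).ne_zero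
  have hψ0 : (0 : ℝ) < ψ := Nat.cast_pos.mpr (Fact.out : ψ.Prime).pos
  set u := (Finset.univ.filter fun i => b i ≠ a i).card with hu
  set J := Finset.univ.filter fun i => b i = a i with hJ
  have hJu : J.card + u = n := by
    have := Finset.card_filter_add_card_filter_not (s := (Finset.univ : Finset (Fin n)))
      (fun i => b i = a i)
    simpa [hJ, hu] using this
  set Φ : (Fin D → ZMod ψ) → Finset (Fin D → ZMod ψ) := fun f =>
    Finset.univ.filter fun g => ∀ i ∈ J, codeEval g i ∈ ({codeEval f i} : Finset (ZMod ψ))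
  have hΦ : ∀ f, ((Φ f).card : ℝ) ≤ ψ ^ D * (1 / ψ) ^ J.card + 1 := by
    intro f
    by_cases hD : J.card ≤ D
    · rw [card_codeEval_mem hDn hnψ J hD]
      simp
    · obtain ⟨J', hJ'J, hJ'⟩ := Finset.exists_subset_card_eq (not_le.mp hD).le
      have h1 : (Φ f).card ≤ (Finset.univ.filter fun g : Fin D → ZMod ψ =>
          ∀ i ∈ J', codeEval g i ∈ ({codeEval f i} : Finset (ZMod ψ))).card :=
        Finset.card_le_card fun g hg => by
          simp only [Φ, Finset.mem_filter, Finset.mem_univ, true_and] at hg ⊢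
          exact fun i hi => hg i (hJ'J hi)
      have h2 : ((Φ f).card : ℝ) ≤ 1 := by
        refine (Nat.cast_le.mpr h1).trans_eq ?_
        rw [card_codeEval_mem hDn hnψ J' hJ'.le]
        simp [hJ', hψ]
      refine h2.trans ?_
      have : (0 : ℝ) ≤ ψ ^ D * (1 / ψ) ^ J.card := by positivity
      linarith
  have hsub : (Finset.univ.filter fun σ : Fin n × Fin m → ZMod ψ =>
      a ∈ restrictedCode D σ ∧ b ∈ restrictedCode D σ) ⊆
      (Finset.univ : Finset (Fin D → ZMod ψ)).biUnion fun f => (Φ f).biUnion fun g =>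
        Finset.univ.filter fun σ : Fin n × Fin m → ZMod ψ =>
          (∀ v ∈ rowVars ∅ a ∪ rowVars ∅ b,
            σ v = if v ∈ rowVars ∅ a then codeEval f v.1 else codeEval g v.1) ∧
            ∀ v ∈ (∅ : Finset (Fin n × Fin m)), σ v ∈ (∅ : Finset (ZMod ψ)) := by
    intro σ hσ
    simp only [Finset.mem_filter, Finset.mem_univ, true_and, mem_restrictedCode] at hσ
    obtain ⟨⟨f, hf⟩, g, hg⟩ := hσ
    simp only [Finset.mem_biUnion, Finset.mem_filter, Finset.mem_univ, true_and, Φ, J,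
      Finset.mem_singleton]
    refine ⟨f, g, fun i hi => by rw [hf, hg, hi], fun ⟨i, j⟩ hv => ?_, by simp⟩
    split_ifs with ha
    · obtain rfl : j = a i := (mem_rowVars.mp ha).2
      exact (hf i).symm
    · have hb := (Finset.mem_union.mp hv).resolve_left ha
      obtain rfl : j = b i := (mem_rowVars.mp hb).2
      exact (hg i).symm
  have hScard : (rowVars ∅ a ∪ rowVars ∅ b).card = n + u := by
    rw [Finset.union_comm, ← Finset.card_sdiff_add_card, card_rowVars_sdiff, card_rowVars]
    simp [hu, add_comm]
  have hcount : ∀ f g : Fin D → ZMod ψ, ((Finset.univ.filter fun σ : Fin n × Fin m → ZMod ψ =>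
          (∀ v ∈ rowVars ∅ a ∪ rowVars ∅ b,
            σ v = if v ∈ rowVars ∅ a then codeEval f v.1 else codeEval g v.1) ∧
            ∀ v ∈ (∅ : Finset (Fin n × Fin m)), σ v ∈ (∅ : Finset (ZMod ψ))).card : ℝ) =
      ψ ^ Fintype.card (Fin n × Fin m) * (1 / ψ) ^ (n + u) := by
    intro f g
    rw [card_forall_mem _ ∅ (Finset.disjoint_empty_right _) _ fun _ => ∅, hScard]
    simp
  calc _ ≤ _ := Nat.cast_le.mpr (Finset.card_le_card hsub)
    _ ≤ ∑ f : Fin D → ZMod ψ, ∑ g ∈ Φ f,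
        (ψ : ℝ) ^ Fintype.card (Fin n × Fin m) * (1 / ψ) ^ (n + u) := by
      refine (Nat.cast_le.mpr (Finset.card_biUnion_le.trans
        (Finset.sum_le_sum fun f _ => Finset.card_biUnion_le))).trans ?_
      push_cast
      exact Finset.sum_le_sum fun f _ => Finset.sum_le_sum fun g _ => (hcount f g).le
    _ ≤ ∑ f : Fin D → ZMod ψ, (ψ ^ D * (1 / ψ) ^ J.card + 1) *
        ((ψ : ℝ) ^ Fintype.card (Fin n × Fin m) * (1 / ψ) ^ (n + u)) := by
      refine Finset.sum_le_sum fun f _ => ?_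
      rw [Finset.sum_const, nsmul_eq_mul]
      exact mul_le_mul_of_nonneg_right (hΦ f) (by positivity)
    _ = _ := by
      rw [Finset.sum_const, nsmul_eq_mul, Finset.card_univ, Fintype.card_fun, ZMod.card,
        Fintype.card_fin]
      have : (1 / (ψ : ℝ)) ^ n = (1 / ψ) ^ J.card * (1 / ψ) ^ u := by rw [← pow_add, hJu]
      rw [pow_add, this]
      push_cast
      ring

theorem card_mem_restrictedCode_forall_le (hDn : D ≤ n) (hnψ : n ≤ ψ) (a : Fin n → Fin m)
    (U : Finset (Fin n × Fin m)) (hU : U.card ≤ D) (W : Fin n → Finset (ZMod ψ)) :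
    ((Finset.univ.filter fun σ : Fin n × Fin m → ZMod ψ =>
      a ∈ restrictedCode D σ ∧ ∀ v ∈ U, σ v ∈ W v.1).card : ℝ) ≤
      ψ ^ Fintype.card (Fin n × Fin m) * (ψ ^ D * (1 / ψ) ^ n) *
        ∏ v ∈ U, ((W v.1).card : ℝ) / ψ := by
  set S := rowVars ∅ a with hS
  have hmemS : ∀ i, (i, a i) ∈ S := fun i => mem_rowVars.mpr ⟨Finset.notMem_empty _, rfl⟩
  set J : Finset (Fin n) := Finset.univ.filter fun i => (i, a i) ∈ U with hJ
  have hUJ : U ∩ S = J.image fun i => (i, a i) := by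
    ext ⟨i, j⟩
    simp only [Finset.mem_inter, hS, mem_rowVars, Finset.notMem_empty, not_false_eq_true, true_and,
      Finset.mem_image, hJ, Finset.mem_filter, Finset.mem_univ, Prod.mk.injEq]
    constructor
    · rintro ⟨h, rfl⟩; exact ⟨i, h, rfl, rfl⟩
    · rintro ⟨i, h, rfl, rfl⟩; exact ⟨h, rfl⟩
  have hinj : Function.Injective fun i => (i, a i) := fun _ _ h => (Prod.mk.inj h).1
  have hJcard : J.card ≤ D := by
    rw [← Finset.card_image_of_injective J hinj, ← hUJ]
    exact (Finset.card_le_card Finset.inter_subset_left).trans hU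
  have hsub : (Finset.univ.filter fun σ : Fin n × Fin m → ZMod ψ =>
      a ∈ restrictedCode D σ ∧ ∀ v ∈ U, σ v ∈ W v.1) ⊆
      (Finset.univ.filter fun c : Fin D → ZMod ψ => ∀ i ∈ J, codeEval c i ∈ W i).biUnion fun c =>
        Finset.univ.filter fun σ : Fin n × Fin m → ZMod ψ =>
          (∀ v ∈ S, σ v = codeEval c v.1) ∧ ∀ v ∈ U \ S, σ v ∈ W v.1 := by
    intro σ hσ
    simp only [Finset.mem_filter, Finset.mem_univ, true_and, mem_restrictedCode] at hσ
    obtain ⟨⟨c, hc⟩, hσ⟩ := hσ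
    simp only [Finset.mem_biUnion, Finset.mem_filter, Finset.mem_univ, true_and]
    refine ⟨c, fun i hi => ?_, fun ⟨i, j⟩ hv => ?_, fun v hv => hσ v (Finset.mem_sdiff.mp hv).1⟩
    · rw [hc i]
      exact hσ (i, a i) (Finset.mem_filter.mp hi).2
    · obtain rfl : j = a i := (mem_rowVars.mp hv).2
      exact (hc i).symm
  calc _ ≤ _ := Nat.cast_le.mpr (Finset.card_le_card hsub)
    _ ≤ ∑ c ∈ Finset.univ.filter fun c : Fin D → ZMod ψ => ∀ i ∈ J, codeEval c i ∈ W i,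
        ψ ^ Fintype.card (Fin n × Fin m) * (1 / ψ) ^ S.card *
          ∏ v ∈ U \ S, ((W v.1).card : ℝ) / ψ := by
      refine (Nat.cast_le.mpr Finset.card_biUnion_le).trans_eq ?_
      rw [Nat.cast_sum]
      exact Finset.sum_congr rfl fun c _ =>
        card_forall_mem S (U \ S) Finset.disjoint_sdiff (fun v => codeEval c v.1) fun v => W v.1
    _ = _ := by
      rw [Finset.sum_const, nsmul_eq_mul, card_codeEval_mem hDn hnψ J hJcard,
        ← Finset.prod_inter_mul_prod_sdiff U S, hUJ, Finset.prod_image fun _ _ _ _ h => hinj h,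
        hS, card_rowVars]
      simp only [Finset.compl_empty, Finset.card_univ, Fintype.card_fin]
      ring

end restrictedCode

section weights

theorem sum_pow_card_filter {V : Type*} [Fintype V] [DecidableEq V] {x : ℝ} (hx : 0 ≤ x)
    (A Δ : Finset V) (hAΔ : Disjoint A Δ) :
    ∑ β ∈ Finset.univ.filter (fun β : Finset V => Disjoint β A ∧ Δ ⊆ β), x ^ β.card =
      (1 + x) ^ Fintype.card V * (1 / (1 + x)) ^ A.card * (x / (1 + x)) ^ Δ.card := by
  have hx1 : 1 + x ≠ 0 := by positivity
  have hprod := Fintype.prod_add (fun v => if v ∈ A then 0 else x) fun v => if v ∈ Δ then 0 else 1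
  have hterm : ∀ β : Finset V, (∏ v ∈ β, if v ∈ A then 0 else x) *
      (∏ v ∈ βᶜ, if v ∈ Δ then (0 : ℝ) else 1) =
      if Disjoint β A ∧ Δ ⊆ β then x ^ β.card else 0 := by
    intro β
    by_cases h1 : Disjoint β A
    · by_cases h2 : Δ ⊆ β
      · rw [if_pos ⟨h1, h2⟩, Finset.prod_congr rfl fun v hv =>
          if_neg (Finset.disjoint_left.mp h1 hv), Finset.prod_const,
          Finset.prod_eq_one fun v hv => if_neg fun h => Finset.mem_compl.mp hv (h2 h), mul_one]
      · obtain ⟨v, hv, hvβ⟩ := Finset.not_subset.mp h2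
        have h0 : (∏ v ∈ βᶜ, if v ∈ Δ then (0 : ℝ) else 1) = 0 :=
          Finset.prod_eq_zero (Finset.mem_compl.mpr hvβ) (if_pos hv)
        rw [if_neg fun h => h2 h.2, h0, mul_zero]
    · obtain ⟨v, hv, hvA⟩ := Finset.not_disjoint_iff.mp h1
      have h0 : (∏ v ∈ β, if v ∈ A then 0 else x) = 0 := Finset.prod_eq_zero hv (if_pos hvA)
      rw [if_neg fun h => h1 h.1, h0, zero_mul]
  rw [Finset.sum_filter, ← Finset.sum_congr rfl fun β _ => hterm β, ← hprod]
  have hv : ∀ v ∈ (Finset.univ : Finset V),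
      (if v ∈ A then 0 else x) + (if v ∈ Δ then (0 : ℝ) else 1) =
      (1 + x) * (if v ∈ A then 1 / (1 + x) else 1) * if v ∈ Δ then x / (1 + x) else 1 := by
    intro v _
    by_cases hA : v ∈ A
    · simp [hA, Finset.disjoint_left.mp hAΔ hA, hx1]
    · by_cases hΔ : v ∈ Δ
      · simp only [hA, hΔ, if_true, if_false]
        field_simp
        ring
      · simp [hA, hΔ, add_comm]
  rw [Finset.prod_congr rfl hv, Finset.prod_mul_distrib, Finset.prod_mul_distrib,
    Finset.prod_const, Finset.prod_ite_mem, Finset.prod_ite_mem, Finset.univ_inter,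
    Finset.univ_inter, Finset.prod_const, Finset.prod_const, Finset.card_univ]

theorem pow_mul_card_le {V : Type*} [Fintype V] [DecidableEq V] {x : ℝ} (hx : 0 ≤ x) (hx1 : x ≤ 1)
    (s : ℕ) :
    x ^ s * ((Finset.univ.filter fun A : Finset V => A.card ≤ s).card : ℝ) ≤
      (1 + x) ^ Fintype.card V := by
  have h := sum_pow_card_filter hx (∅ : Finset V) ∅ (Finset.disjoint_empty_left _)
  simp only [Finset.disjoint_empty_right, Finset.empty_subset, and_self, Finset.card_empty,
    pow_zero, mul_one] at h
  rw [← h, mul_comm, ← nsmul_eq_mul, ← Finset.sum_const]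
  refine (Finset.sum_le_sum fun A hA => ?_).trans
    (Finset.sum_le_sum_of_subset_of_nonneg (fun A _ => by simp) fun _ _ _ => by positivity)
  exact pow_le_pow_of_le_one hx hx1 (Finset.mem_filter.mp hA).2

variable {n m : ℕ}

open Classical in
theorem sum_conflict_le {x : ℝ} (hx : 0 ≤ x) (K : Finset (Fin n)) (a b : Fin n → Fin m) :
    ∑ β ∈ Finset.univ.filter (fun β => Disjoint β (rowVars K a) ∧ Conflict K a b β),
        x ^ β.card ≤
      (1 + x) ^ (n * m) * (1 / (1 + x)) ^ Kᶜ.card *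
        ((if ∀ i ∈ K, b i = a i then
            (1 / (1 + x)) ^ (Kᶜ.filter fun i => b i ≠ a i).card else 0) +
          (x / (1 + x)) ^ (Kᶜ.filter fun i => b i ≠ a i).card) := by
  have hcard : Fintype.card (Fin n × Fin m) = n * m := by simp
  have hcol := sum_pow_card_filter hx (rowVars K a) (rowVars K b \ rowVars K a)
    Finset.disjoint_sdiff
  rw [card_rowVars_sdiff, card_rowVars, hcard] at hcol
  have hsub : ∀ β : Finset (Fin n × Fin m), 0 ≤ x ^ β.card := fun β => by positivity
  by_cases hK : ∀ i ∈ K, b i = a i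
  · have hrow := sum_pow_card_filter hx (rowVars K b ∪ rowVars K a) ∅
      (Finset.disjoint_empty_right _)
    rw [← Finset.card_sdiff_add_card, card_rowVars_sdiff, card_rowVars, hcard, pow_add] at hrow
    rw [if_pos hK, mul_add, ← hcol]
    refine le_trans (Finset.sum_le_sum_of_subset_of_nonneg (t := Finset.univ.filter (fun β =>
      Disjoint β (rowVars K b ∪ rowVars K a) ∧ ∅ ⊆ β) ∪ Finset.univ.filter (fun β =>
      Disjoint β (rowVars K a) ∧ rowVars K b \ rowVars K a ⊆ β)) ?_ fun _ _ _ => hsub _) ?_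
    · intro β hβ
      simp only [Finset.mem_filter, Finset.mem_univ, true_and, Finset.mem_union,
        Finset.disjoint_union_right, Finset.empty_subset, and_true] at hβ ⊢
      exact hβ.2.imp (fun h => ⟨h.2, hβ.1⟩) fun h => ⟨hβ.1, h⟩
    · have := Finset.sum_nonneg (s := Finset.univ.filter (fun β =>
        Disjoint β (rowVars K b ∪ rowVars K a) ∧ ∅ ⊆ β) ∩ Finset.univ.filter (fun β =>
        Disjoint β (rowVars K a) ∧ rowVars K b \ rowVars K a ⊆ β)) fun β _ => hsub β
      have h2 := Finset.sum_union_inter (s₁ := Finset.univ.filter (fun β =>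
        Disjoint β (rowVars K b ∪ rowVars K a) ∧ ∅ ⊆ β)) (s₂ := Finset.univ.filter (fun β =>
        Disjoint β (rowVars K a) ∧ rowVars K b \ rowVars K a ⊆ β))
        (f := fun β => x ^ β.card)
      rw [hrow] at h2
      simp only [Finset.card_empty, pow_zero, mul_one] at h2
      linarith
  · rw [if_neg hK, zero_add, ← hcol]
    refine Finset.sum_le_sum_of_subset_of_nonneg (fun β hβ => ?_) fun _ _ _ => hsub _
    simp only [Finset.mem_filter, Finset.mem_univ, true_and] at hβ ⊢
    exact ⟨hβ.1, hβ.2.resolve_left fun h => hK h.1⟩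

theorem sum_prod_mul_pow_le (K : Finset (Fin n)) (a : Fin n → Fin m) (g : Fin n → Fin m → ℝ)
    (hg : ∀ i j, 0 ≤ g i j) {z : ℝ} (hz : 0 ≤ z) :
    ∑ b : Fin n → Fin m, (∏ i ∈ K, g i (b i)) * z ^ (Kᶜ.filter fun i => b i ≠ a i).card ≤
      (∏ i ∈ K, ∑ j, g i j) * (1 + m * z) ^ Kᶜ.card := by
  set h : Fin n → Fin m → ℝ := fun i j => if i ∈ K then g i j else if j ≠ a i then z else 1
  have hterm : ∀ b : Fin n → Fin m,
      (∏ i ∈ K, g i (b i)) * z ^ (Kᶜ.filter fun i => b i ≠ a i).card = ∏ i, h i (b i) := by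
    intro b
    rw [← Finset.prod_mul_prod_compl K]
    congr 1
    · exact Finset.prod_congr rfl fun i hi => (if_pos hi).symm
    · rw [← Finset.prod_const, Finset.prod_filter]
      exact Finset.prod_congr rfl fun i hi => (if_neg (Finset.mem_compl.mp hi)).symm
  have hsum : ∑ b : Fin n → Fin m, ∏ i, h i (b i) = ∏ i, ∑ j, h i j := by
    rw [Finset.prod_univ_sum, Fintype.piFinset_univ]
  rw [Finset.sum_congr rfl fun b _ => hterm b, hsum, ← Finset.prod_mul_prod_compl K,
    ← Finset.prod_const]
  have hh : ∀ i j, 0 ≤ h i j := by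
    intro i j
    simp only [h]
    split_ifs
    exacts [hg i j, hz, zero_le_one]
  refine mul_le_mul (Finset.prod_congr rfl fun i hi => by simp [h, hi]).le
    (Finset.prod_le_prod (fun i _ => Finset.sum_nonneg fun j _ => hh i j) fun i hi => ?_)
    (Finset.prod_nonneg fun i _ => Finset.sum_nonneg fun j _ => hh i j)
    (Finset.prod_nonneg fun i _ => Finset.sum_nonneg fun j _ => hg i j)
  calc ∑ j, h i j ≤ ∑ j, ((if j = a i then 1 else 0) + z) := by
        refine Finset.sum_le_sum fun j _ => ?_
        simp only [h, if_neg (Finset.mem_compl.mp hi)]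
        split_ifs <;> simp_all
    _ = 1 + m * z := by simp [Finset.sum_add_distrib]

theorem sum_conflict_weight_le (K : Finset (Fin n)) (a : Fin n → Fin m) {κ y p q : ℝ}
    (hκ : 0 ≤ κ) (hy : 0 ≤ y) (hp : 0 ≤ p) (hp1 : p ≤ 1) (hq : 0 ≤ q) (hq1 : q ≤ 1) :
    ∑ b ∈ Finset.univ.erase a, (κ + y ^ (Finset.univ.filter fun i => b i ≠ a i).card) *
        ((if ∀ i ∈ K, b i = a i then q ^ (Kᶜ.filter fun i => b i ≠ a i).card else 0) +
          p ^ (Kᶜ.filter fun i => b i ≠ a i).card) ≤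
      κ * (1 + m * q) ^ Kᶜ.card + κ * m ^ K.card * (1 + m * p) ^ Kᶜ.card +
        2 * ((1 + m * y) ^ n - 1) := by
  have hrow : ∑ b : Fin n → Fin m,
      (if ∀ i ∈ K, b i = a i then q ^ (Kᶜ.filter fun i => b i ≠ a i).card else 0) ≤
        (1 + m * q) ^ Kᶜ.card := by
    have h := sum_prod_mul_pow_le K a (fun i j => if j = a i then 1 else 0)
      (fun i j => by split_ifs <;> simp) hq
    refine (Finset.sum_le_sum fun b _ => ?_).trans (h.trans_eq (by simp))
    rw [Finset.prod_boole]
    split_ifs <;> simp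
  have hcol : ∑ b : Fin n → Fin m, p ^ (Kᶜ.filter fun i => b i ≠ a i).card ≤
      m ^ K.card * (1 + m * p) ^ Kᶜ.card := by
    have h := sum_prod_mul_pow_le K a (fun _ _ => 1) (fun _ _ => zero_le_one) hp
    simpa using h
  have hy' : ∑ b ∈ Finset.univ.erase a, y ^ (Finset.univ.filter fun i => b i ≠ a i).card ≤
      (1 + m * y) ^ n - 1 := by
    have h := sum_prod_mul_pow_le ∅ a (fun _ _ => 1) (fun _ _ => zero_le_one) hy
    simp only [Finset.prod_empty, one_mul, Finset.compl_empty, Finset.card_univ,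
      Fintype.card_fin] at h
    rw [← Finset.add_sum_erase _ _ (Finset.mem_univ a)] at h
    simp only [ne_eq, not_true_eq_false, Finset.filter_false, Finset.card_empty, pow_zero] at h
    simp only [ne_eq]
    linarith
  set Rw : (Fin n → Fin m) → ℝ := fun b =>
    if ∀ i ∈ K, b i = a i then q ^ (Kᶜ.filter fun i => b i ≠ a i).card else 0 with hRw
  set Cw : (Fin n → Fin m) → ℝ := fun b => p ^ (Kᶜ.filter fun i => b i ≠ a i).card with hCw
  set Yw : (Fin n → Fin m) → ℝ := fun b =>
    y ^ (Finset.univ.filter fun i => b i ≠ a i).card with hYw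
  have hR0 : ∀ b, 0 ≤ Rw b := fun b => by simp only [hRw]; split_ifs <;> positivity
  have hR1 : ∀ b, Rw b ≤ 1 := fun b => by
    simp only [hRw]; split_ifs
    exacts [pow_le_one₀ hq hq1, zero_le_one]
  have hC0 : ∀ b, 0 ≤ Cw b := fun b => by positivity
  have hC1 : ∀ b, Cw b ≤ 1 := fun b => pow_le_one₀ hp hp1
  have hY0 : ∀ b, 0 ≤ Yw b := fun b => by positivity
  calc ∑ b ∈ Finset.univ.erase a, (κ + Yw b) * (Rw b + Cw b)
      ≤ ∑ b ∈ Finset.univ.erase a, (κ * Rw b + κ * Cw b + 2 * Yw b) := by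
        refine Finset.sum_le_sum fun b _ => ?_
        nlinarith [mul_le_mul_of_nonneg_left (hR1 b) (hY0 b),
          mul_le_mul_of_nonneg_left (hC1 b) (hY0 b)]
    _ = κ * ∑ b ∈ Finset.univ.erase a, Rw b + κ * ∑ b ∈ Finset.univ.erase a, Cw b +
        2 * ∑ b ∈ Finset.univ.erase a, Yw b := by
        rw [Finset.sum_add_distrib, Finset.sum_add_distrib, Finset.mul_sum, Finset.mul_sum,
          Finset.mul_sum]
    _ ≤ _ := by
        have e1 : ∑ b ∈ Finset.univ.erase a, Rw b ≤ (1 + m * q) ^ Kᶜ.card :=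
          (Finset.sum_le_sum_of_subset_of_nonneg (Finset.erase_subset _ _)
            fun b _ _ => hR0 b).trans hrow
        have e2 : ∑ b ∈ Finset.univ.erase a, Cw b ≤ m ^ K.card * (1 + m * p) ^ Kᶜ.card :=
          (Finset.sum_le_sum_of_subset_of_nonneg (Finset.erase_subset _ _)
            fun b _ _ => hC0 b).trans hcol
        have := mul_le_mul_of_nonneg_left e1 hκ
        have := mul_le_mul_of_nonneg_left e2 hκ
        linarith

end weights

section hitSet

variable {n m D ψ : ℕ}

/-- The variables that `σ` sends into `S`. -/
def hitSet (σ : Fin n × Fin m → ZMod ψ) (S : Finset (Fin n × ZMod ψ)) : Finset (Fin n × Fin m) :=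
  Finset.univ.filter fun v => (v.1, σ v) ∈ S

variable [Fact ψ.Prime]

theorem card_mem_restrictedCode_hitSet_le (hDn : D ≤ n) (hnψ : n ≤ ψ) {r : ℕ} (hr : r ≤ D)
    (a : Fin n → Fin m) (S : Finset (Fin n × ZMod ψ)) :
    ((Finset.univ.filter fun σ : Fin n × Fin m → ZMod ψ =>
      a ∈ restrictedCode D σ ∧ r ≤ (hitSet σ S).card).card : ℝ) ≤
      ψ ^ Fintype.card (Fin n × Fin m) * (ψ ^ D * (1 / ψ) ^ n) * (m * S.card / ψ) ^ r := by
  set W : Fin n → Finset (ZMod ψ) := fun i => Finset.univ.filter fun j => (i, j) ∈ S with hW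
  set w : Fin n × Fin m → ℝ := fun v => ((W v.1).card : ℝ) / ψ with hw
  set M : ℝ := ψ ^ Fintype.card (Fin n × Fin m) * (ψ ^ D * (1 / ψ) ^ n) with hM
  have hM0 : 0 ≤ M := by positivity
  have hw0 : ∀ v, 0 ≤ w v := fun v => by positivity
  have hWS : ∑ i, (W i).card = S.card := by
    rw [Finset.card_eq_sum_card_fiberwise (f := Prod.fst) (s := S) (t := Finset.univ) (by simp)]
    refine Finset.sum_congr rfl fun i _ => ?_
    rw [← Finset.card_image_of_injective (W i) (Prod.mk_right_injective i)]
    congr 1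
    ext ⟨i', j⟩
    simp only [hW, Finset.mem_image, Finset.mem_filter, Finset.mem_univ, true_and, Prod.mk.injEq]
    constructor
    · rintro ⟨j, h, rfl, rfl⟩; exact ⟨h, rfl⟩
    · rintro ⟨h, rfl⟩; exact ⟨j, h, rfl, rfl⟩
  have hsum : ∑ v, w v = m * S.card / ψ := by
    rw [Fintype.sum_prod_type]
    simp only [hw, Finset.sum_const, Finset.card_univ, Fintype.card_fin, nsmul_eq_mul]
    rw [← hWS, Nat.cast_sum, ← Finset.mul_sum, ← Finset.sum_div, mul_div_assoc]
  have hsub : (Finset.univ.filter fun σ : Fin n × Fin m → ZMod ψ =>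
      a ∈ restrictedCode D σ ∧ r ≤ (hitSet σ S).card) ⊆
      (Finset.univ.filter fun p : Fin r → Fin n × Fin m => Function.Injective p).biUnion fun p =>
        Finset.univ.filter fun σ : Fin n × Fin m → ZMod ψ =>
          a ∈ restrictedCode D σ ∧ ∀ v ∈ Finset.univ.image p, σ v ∈ W v.1 := by
    intro σ hσ
    obtain ⟨-, ha, hσ⟩ := Finset.mem_filter.mp hσ
    obtain ⟨U, hU, hUr⟩ := Finset.exists_subset_card_eq hσ
    simp only [Finset.mem_biUnion, Finset.mem_filter, Finset.mem_univ, true_and,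
      Finset.mem_image]
    refine ⟨fun i => ((Finset.equivFinOfCardEq hUr).symm i : Fin n × Fin m),
      Subtype.val_injective.comp (Equiv.injective _), ha, ?_⟩
    rintro v ⟨i, rfl⟩
    have := hU ((Finset.equivFinOfCardEq hUr).symm i).2
    simpa [hitSet, hW] using this
  calc _ ≤ _ := Nat.cast_le.mpr (Finset.card_le_card hsub)
    _ ≤ ∑ p ∈ Finset.univ.filter (fun p : Fin r → Fin n × Fin m => Function.Injective p),
        M * ∏ i, w (p i) := by
      refine (Nat.cast_le.mpr Finset.card_biUnion_le).trans ?_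
      rw [Nat.cast_sum]
      refine Finset.sum_le_sum fun p hp => ?_
      have hp := (Finset.mem_filter.mp hp).2
      have := card_mem_restrictedCode_forall_le hDn hnψ a (Finset.univ.image p)
        (by rw [Finset.card_image_of_injective _ hp]; simpa using hr) W
      rwa [Finset.prod_image fun _ _ _ _ h => hp h] at this
    _ ≤ ∑ p : Fin r → Fin n × Fin m, M * ∏ i, w (p i) :=
      Finset.sum_le_sum_of_subset_of_nonneg (Finset.subset_univ _) fun p _ _ =>
        mul_nonneg hM0 (Finset.prod_nonneg fun i _ => hw0 _)
    _ = _ := by rw [← Finset.mul_sum, ← Fintype.sum_pow, hsum]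

end hitSet

section averaging

variable {n m D ψ : ℕ} {F : Type*} [Field F]

open Classical in
theorem sum_conflictFree_le [Infinite F] {T d r : ℕ} (K : Finset (Fin n))
    (𝒞 : Finset (Fin n → Fin m)) (R : Fin T → Fin d → MvPolynomial (Fin n × Fin m) F)
    (hr : ∀ i j, (R i j).vars.card ≤ r) (hR : codePoly F 𝒞 = ∑ i, ∏ j, R i j) {x : ℝ}
    (hx : 0 < x) (hx1 : x ≤ 1) :
    (∑ a ∈ 𝒞, ∑ β ∈ Finset.univ.filter (fun β => Disjoint β (rowVars K a) ∧
        ∀ b ∈ 𝒞, b ≠ a → ¬ Conflict K a b β), x ^ β.card) * x ^ (K.card * r) ≤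
      (n * m + 1) * T * (1 + x) ^ (n * m) := by
  set E : Finset ((Fin n → Fin m) × Finset (Fin n × Fin m)) :=
    (𝒞 ×ˢ Finset.univ).filter fun e => Disjoint e.2 (rowVars K e.1) ∧
      ∀ b ∈ 𝒞, b ≠ e.1 → ¬ Conflict K e.1 b e.2 with hE
  have hcard : Fintype.card (Fin n × Fin m) = n * m := by simp
  have hsum : (∑ a ∈ 𝒞, ∑ β ∈ Finset.univ.filter (fun β => Disjoint β (rowVars K a) ∧
        ∀ b ∈ 𝒞, b ≠ a → ¬ Conflict K a b β), x ^ β.card) = ∑ e ∈ E, x ^ e.2.card := by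
    rw [hE, Finset.sum_filter, Finset.sum_product]
    exact Finset.sum_congr rfl fun a _ => Finset.sum_filter _ _
  have hmaps : ∀ e ∈ E, e.2.card ∈ Finset.range (n * m + 1) := fun e _ => by
    rw [Finset.mem_range, Nat.lt_succ_iff, ← hcard]
    exact Finset.card_le_univ _
  rw [hsum, ← Finset.sum_fiberwise_of_maps_to hmaps, Finset.sum_mul]
  have hfib : ∀ ℓ ∈ Finset.range (n * m + 1),
      (∑ e ∈ E.filter fun e => e.2.card = ℓ, x ^ e.2.card) * x ^ (K.card * r) ≤
        T * (1 + x) ^ (n * m) := by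
    intro ℓ _
    have h1 := card_conflictFree_le K 𝒞 R hr hR ℓ (E.filter fun e => e.2.card = ℓ) (by
      intro e he
      simp only [hE, Finset.mem_filter, Finset.mem_product, Finset.mem_univ, and_true] at he
      exact ⟨he.1.1, he.2, he.1.2.1, he.1.2.2⟩)
    have h2 := pow_mul_card_le (V := Fin n × Fin m) hx.le hx1 (ℓ + K.card * r)
    rw [hcard] at h2
    rw [Finset.sum_congr rfl fun e he => by rw [(Finset.mem_filter.mp he).2], Finset.sum_const,
      nsmul_eq_mul, mul_assoc, ← pow_add]
    calc _ ≤ ((T * (Finset.univ.filter fun A : Finset (Fin n × Fin m) =>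
          A.card ≤ ℓ + K.card * r).card : ℕ) : ℝ) * x ^ (ℓ + K.card * r) :=
          mul_le_mul_of_nonneg_right (Nat.cast_le.mpr h1) (by positivity)
      _ = T * (x ^ (ℓ + K.card * r) * ((Finset.univ.filter fun A : Finset (Fin n × Fin m) =>
          A.card ≤ ℓ + K.card * r).card : ℝ)) := by push_cast; ring
      _ ≤ _ := mul_le_mul_of_nonneg_left h2 (by positivity)
  refine (Finset.sum_le_sum hfib).trans_eq ?_
  rw [Finset.sum_const, Finset.card_range, nsmul_eq_mul]
  push_cast
  ring

/-- An upper bound for the proportion of shifts in which `b` conflicts with `a`. -/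
noncomputable def conflictWeight (K : Finset (Fin n)) (x : ℝ) (a b : Fin n → Fin m) : ℝ :=
  (if ∀ i ∈ K, b i = a i then (1 / (1 + x)) ^ (Kᶜ.filter fun i => b i ≠ a i).card else 0) +
    (x / (1 + x)) ^ (Kᶜ.filter fun i => b i ≠ a i).card

theorem conflictWeight_nonneg (K : Finset (Fin n)) {x : ℝ} (hx : 0 ≤ x) (a b : Fin n → Fin m) :
    0 ≤ conflictWeight K x a b := by
  rw [conflictWeight]
  split_ifs <;> positivity

open Classical in
theorem le_sum_conflictFree (K : Finset (Fin n)) (𝒞 : Finset (Fin n → Fin m)) {x : ℝ}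
    (hx : 0 < x) (a : Fin n → Fin m) :
    (1 + x) ^ (n * m) * (1 / (1 + x)) ^ Kᶜ.card *
        (1 - ∑ b ∈ 𝒞.erase a, conflictWeight K x a b) ≤
      ∑ β ∈ Finset.univ.filter (fun β => Disjoint β (rowVars K a) ∧
        ∀ b ∈ 𝒞, b ≠ a → ¬ Conflict K a b β), x ^ β.card := by
  have h0 := sum_pow_card_filter hx.le (rowVars K a) ∅ (Finset.disjoint_empty_right _)
  have hcard : Fintype.card (Fin n × Fin m) = n * m := by simp
  simp only [Finset.empty_subset, and_true, Finset.card_empty, pow_zero, mul_one,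
    card_rowVars, hcard] at h0
  rw [mul_sub, mul_one, Finset.mul_sum, sub_le_iff_le_add]
  refine h0.ge.trans (le_trans ?_ (add_le_add_right (Finset.sum_le_sum fun b _ =>
    sum_conflict_le hx.le K a b) _))
  simp only [Finset.sum_filter]
  rw [Finset.sum_comm, ← Finset.sum_add_distrib]
  refine Finset.sum_le_sum fun β _ => ?_
  have hx' : 0 ≤ x ^ β.card := by positivity
  have hnn : ∀ b ∈ 𝒞.erase a,
      0 ≤ if Disjoint β (rowVars K a) ∧ Conflict K a b β then x ^ β.card else 0 := fun b _ => by
    split_ifs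
    exacts [hx', le_rfl]
  by_cases hd : Disjoint β (rowVars K a)
  · by_cases hc : ∀ b ∈ 𝒞, b ≠ a → ¬ Conflict K a b β
    · rw [if_pos hd, if_pos ⟨hd, hc⟩]
      exact le_add_of_nonneg_right (Finset.sum_nonneg hnn)
    · rw [if_pos hd, if_neg fun h => hc h.2, zero_add]
      push Not at hc
      obtain ⟨b, hb, hba, hcb⟩ := hc
      refine le_trans ?_ (Finset.single_le_sum hnn (Finset.mem_erase.mpr ⟨hba, hb⟩))
      rw [if_pos ⟨hd, hcb⟩]
  · rw [if_neg hd, if_neg fun h => hd h.1, zero_add]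
    exact Finset.sum_nonneg hnn

variable [Fact ψ.Prime]

/-- If all random restrictions of a sum of products of sparsely supported polynomials
are the code polynomials of the restricted Reed–Solomon codes, the sum has many terms. -/
theorem le_card_of_restrictions [Infinite F] {T d r : ℕ} (hDn : D ≤ n) (hnψ : n ≤ ψ) (hr : r ≤ D)
    (K : Finset (Fin n)) (V : Fin T → Fin d → Finset (Fin n × ZMod ψ)) {s : ℝ}
    (hs : ∀ i j, ((V i j).card : ℝ) ≤ s)
    (hR : ∀ σ : Fin n × Fin m → ZMod ψ, ∃ R : Fin T → Fin d → MvPolynomial (Fin n × Fin m) F,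
      codePoly F (restrictedCode D σ) = ∑ i, ∏ j, R i j ∧
        ∀ i j, (R i j).vars ⊆ hitSet σ (V i j))
    {x κ : ℝ} (hx : 0 < x) (hx1 : x ≤ 1) (hκ : κ = ψ ^ D * (1 / ψ) ^ n)
    (hsmall : κ * (1 + m * (1 / (1 + x))) ^ Kᶜ.card +
      κ * m ^ K.card * (1 + m * (x / (1 + x))) ^ Kᶜ.card + 2 * ((1 + m * (1 / ψ)) ^ n - 1) +
      T * d * (m * s / ψ) ^ r ≤ 1 / 2) :
    κ * m ^ n * (1 / (1 + x)) ^ Kᶜ.card * x ^ (K.card * r) ≤ 2 * (n * m + 1) * T := by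
  have hψ0 : (0 : ℝ) < ψ := Nat.cast_pos.mpr (Fact.out : ψ.Prime).pos
  have hκ0 : 0 ≤ κ := by rw [hκ]; positivity
  set Ψ : ℝ := (ψ : ℝ) ^ Fintype.card (Fin n × Fin m) with hΨ
  have hΨ0 : 0 < Ψ := by positivity
  set M : ℝ := (n * m + 1) * T / ((1 / (1 + x)) ^ Kᶜ.card * x ^ (K.card * r)) with hM
  have hM0 : 0 ≤ M := by positivity
  set w : (Fin n → Fin m) → (Fin n → Fin m) → ℝ := conflictWeight K x with hw
  have hw0 : ∀ a b, 0 ≤ w a b := conflictWeight_nonneg K hx.le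
  -- the estimate for a single restriction
  have hσ : ∀ σ : Fin n × Fin m → ZMod ψ,
      ∑ a ∈ restrictedCode D σ, (1 - ∑ b ∈ (restrictedCode D σ).erase a, w a b) ≤
        M + ∑ i, ∑ j, ∑ a ∈ restrictedCode D σ,
          if r ≤ (hitSet σ (V i j)).card then (1 : ℝ) else 0 := by
    intro σ
    have hnn : ∀ i j, 0 ≤ ∑ a ∈ restrictedCode (n := n) (m := m) D σ,
        if r ≤ (hitSet σ (V i j)).card then (1 : ℝ) else 0 := fun i j =>
      Finset.sum_nonneg fun a _ => by split_ifs <;> simp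
    by_cases hbad : ∃ i j, r ≤ (hitSet σ (V i j)).card
    · obtain ⟨i, j, hij⟩ := hbad
      have h1 : ∑ a ∈ restrictedCode D σ, (1 - ∑ b ∈ (restrictedCode D σ).erase a, w a b) ≤
          ∑ a ∈ restrictedCode (n := n) (m := m) D σ,
            if r ≤ (hitSet σ (V i j)).card then (1 : ℝ) else 0 := by
        refine Finset.sum_le_sum fun a _ => ?_
        rw [if_pos hij]
        have := Finset.sum_nonneg (s := (restrictedCode D σ).erase a) fun b _ => hw0 a b
        linarith
      have h2 := Finset.single_le_sum (f := fun j => ∑ a ∈ restrictedCode (n := n) (m := m) D σ,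
        if r ≤ (hitSet σ (V i j)).card then (1 : ℝ) else 0) (fun j _ => hnn i j)
        (Finset.mem_univ j)
      have h3 := Finset.single_le_sum (f := fun i => ∑ j, ∑ a ∈ restrictedCode (n := n) (m := m) D σ,
        if r ≤ (hitSet σ (V i j)).card then (1 : ℝ) else 0)
        (fun i _ => Finset.sum_nonneg fun j _ => hnn i j) (Finset.mem_univ i)
      linarith
    · push Not at hbad
      have hS := Finset.sum_nonneg (s := Finset.univ) fun i _ =>
        Finset.sum_nonneg (s := Finset.univ) fun j _ => hnn i j
      refine le_trans ?_ (le_add_of_nonneg_right hS)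
      obtain ⟨R, hR, hvars⟩ := hR σ
      have h1 := sum_conflictFree_le K _ R
        (fun i j => (Finset.card_le_card (hvars i j)).trans (hbad i j).le) hR hx hx1
      have h2 := Finset.sum_le_sum fun a (_ : a ∈ restrictedCode D σ) =>
        le_sum_conflictFree K (restrictedCode D σ) hx a
      rw [← Finset.mul_sum] at h2
      have h3 := (mul_le_mul_of_nonneg_right h2 (by positivity : 0 ≤ x ^ (K.card * r))).trans h1
      rw [hM, le_div_iff₀ (by positivity)]
      have hpos : 0 < (1 + x) ^ (n * m) := by positivity
      refine le_of_mul_le_mul_right ?_ hpos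
      refine le_trans (le_of_eq ?_) h3
      ring
  have hsum := Finset.sum_le_sum fun σ (_ : σ ∈ (Finset.univ : Finset (Fin n × Fin m → ZMod ψ))) =>
    hσ σ
  have hind : ∀ p : (Fin n × Fin m → ZMod ψ) → Prop, [DecidablePred p] →
      ∑ σ : Fin n × Fin m → ZMod ψ, (if p σ then (1 : ℝ) else 0) =
        ((Finset.univ.filter p).card : ℝ) := fun p _ => by simp
  have hmain : ∑ σ : Fin n × Fin m → ZMod ψ, ∑ a ∈ restrictedCode D σ, (1 : ℝ) =
      m ^ n * (Ψ * κ) := by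
    have : ∀ σ : Fin n × Fin m → ZMod ψ, ∑ a ∈ restrictedCode D σ, (1 : ℝ) =
        ∑ a : Fin n → Fin m, if a ∈ restrictedCode D σ then (1 : ℝ) else 0 := fun σ => by simp
    rw [Finset.sum_congr rfl fun σ _ => this σ, Finset.sum_comm]
    simp_rw [hind, card_mem_restrictedCode hDn hnψ]
    rw [Finset.sum_const, nsmul_eq_mul, ← hκ]
    simp [hΨ]
  have hpair : ∑ σ : Fin n × Fin m → ZMod ψ, ∑ a ∈ restrictedCode D σ,
      ∑ b ∈ (restrictedCode D σ).erase a, w a b ≤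
      m ^ n * (Ψ * κ) * (κ * (1 + m * (1 / (1 + x))) ^ Kᶜ.card +
      κ * m ^ K.card * (1 + m * (x / (1 + x))) ^ Kᶜ.card + 2 * ((1 + m * (1 / ψ)) ^ n - 1)) := by
    have : ∀ σ : Fin n × Fin m → ZMod ψ, ∑ a ∈ restrictedCode D σ,
        ∑ b ∈ (restrictedCode D σ).erase a, w a b =
        ∑ a : Fin n → Fin m, ∑ b ∈ Finset.univ.erase a,
          w a b * if a ∈ restrictedCode D σ ∧ b ∈ restrictedCode D σ then (1 : ℝ) else 0 := by
      intro σ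
      rw [← Finset.sum_filter_add_sum_filter_not Finset.univ (· ∈ restrictedCode D σ) fun a =>
        ∑ b ∈ Finset.univ.erase a,
          w a b * if a ∈ restrictedCode D σ ∧ b ∈ restrictedCode D σ then (1 : ℝ) else 0]
      rw [Finset.sum_eq_zero (s := Finset.univ.filter (· ∉ restrictedCode D σ)) fun a ha =>
        Finset.sum_eq_zero fun b _ => by
          rw [if_neg fun h => (Finset.mem_filter.mp ha).2 h.1, mul_zero], add_zero]
      rw [Finset.filter_univ_mem]
      refine Finset.sum_congr rfl fun a ha => ?_
      refine Finset.sum_subset_zero_on_sdiff (Finset.erase_subset_erase _ (Finset.subset_univ _))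
        (fun b hb => ?_) fun b hb => ?_
      · obtain ⟨hb1, hb2⟩ := Finset.mem_sdiff.mp hb
        rw [if_neg fun h => hb2 (Finset.mem_erase.mpr ⟨(Finset.mem_erase.mp hb1).1, h.2⟩),
          mul_zero]
      · rw [if_pos ⟨ha, (Finset.mem_erase.mp hb).2⟩, mul_one]
    rw [Finset.sum_congr rfl fun σ _ => this σ, Finset.sum_comm]
    have ha : ∀ a : Fin n → Fin m, ∑ σ : Fin n × Fin m → ZMod ψ, ∑ b ∈ Finset.univ.erase a,
        w a b * (if a ∈ restrictedCode D σ ∧ b ∈ restrictedCode D σ then (1 : ℝ) else 0) ≤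
        (Ψ * κ) * (κ * (1 + m * (1 / (1 + x))) ^ Kᶜ.card +
          κ * m ^ K.card * (1 + m * (x / (1 + x))) ^ Kᶜ.card +
          2 * ((1 + m * (1 / ψ)) ^ n - 1)) := by
      intro a
      have hq1 : 1 / (1 + x) ≤ 1 := by rw [div_le_one (by positivity)]; linarith
      have hp1 : x / (1 + x) ≤ 1 := by rw [div_le_one (by positivity)]; linarith
      refine le_trans ?_ (mul_le_mul_of_nonneg_left (sum_conflict_weight_le K a hκ0
        (by positivity : 0 ≤ 1 / (ψ : ℝ)) (by positivity) hp1 (by positivity) hq1)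
        (by positivity : 0 ≤ Ψ * κ))
      rw [Finset.sum_comm, Finset.mul_sum]
      refine Finset.sum_le_sum fun b _ => ?_
      rw [← Finset.mul_sum, hind]
      have h := mul_le_mul_of_nonneg_left (card_mem_restrictedCode_inter_le hDn hnψ a b) (hw0 a b)
      rw [← hκ] at h
      refine h.trans_eq ?_
      rw [hw, conflictWeight]
      ring
    refine (Finset.sum_le_sum fun a _ => ha a).trans_eq ?_
    rw [Finset.sum_const, nsmul_eq_mul]
    simp
    ring
  have hbad : ∑ σ : Fin n × Fin m → ZMod ψ, ∑ i, ∑ j, ∑ a ∈ restrictedCode D σ,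
      (if r ≤ (hitSet σ (V i j)).card then (1 : ℝ) else 0) ≤
      m ^ n * (Ψ * κ) * (T * d * (m * s / ψ) ^ r) := by
    rw [Finset.sum_comm]
    simp_rw [Finset.sum_comm (s := (Finset.univ : Finset (Fin n × Fin m → ZMod ψ)))]
    have hij : ∀ i j, ∑ σ : Fin n × Fin m → ZMod ψ, ∑ a ∈ restrictedCode D σ,
        (if r ≤ (hitSet σ (V i j)).card then (1 : ℝ) else 0) ≤
        m ^ n * (Ψ * κ) * (m * s / ψ) ^ r := by
      intro i j
      have : ∀ σ : Fin n × Fin m → ZMod ψ, ∑ a ∈ restrictedCode D σ,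
          (if r ≤ (hitSet σ (V i j)).card then (1 : ℝ) else 0) = ∑ a : Fin n → Fin m,
          if a ∈ restrictedCode D σ ∧ r ≤ (hitSet σ (V i j)).card then (1 : ℝ) else 0 := by
        intro σ
        simp_rw [ite_and]
        rw [Finset.sum_ite_mem, Finset.univ_inter]
      rw [Finset.sum_congr rfl fun σ _ => this σ, Finset.sum_comm]
      have ha : ∀ a : Fin n → Fin m, ∑ σ : Fin n × Fin m → ZMod ψ,
          (if a ∈ restrictedCode D σ ∧ r ≤ (hitSet σ (V i j)).card then (1 : ℝ) else 0) ≤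
          Ψ * κ * (m * s / ψ) ^ r := by
        intro a
        rw [hind]
        have h := card_mem_restrictedCode_hitSet_le hDn hnψ hr a (V i j)
        rw [← hκ] at h
        refine h.trans (mul_le_mul_of_nonneg_left (pow_le_pow_left₀ (by positivity) ?_ _)
          (by positivity))
        have := hs i j
        gcongr
      refine (Finset.sum_le_sum fun a _ => ha a).trans_eq ?_
      rw [Finset.sum_const, nsmul_eq_mul]
      simp
      ring
    refine (Finset.sum_le_sum fun i _ => Finset.sum_le_sum fun j _ => hij i j).trans_eq ?_
    simp
    ring
  simp_rw [Finset.sum_sub_distrib, Finset.sum_add_distrib] at hsum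
  rw [hmain] at hsum
  have hconst : ∑ σ : Fin n × Fin m → ZMod ψ, M = Ψ * M := by
    rw [Finset.sum_const, nsmul_eq_mul]
    simp [hΨ, ZMod.card]
  rw [hconst] at hsum
  have hP : 0 ≤ m ^ n * (Ψ * κ) := by positivity
  have h4 := mul_le_mul_of_nonneg_left hsmall hP
  have h5 : Ψ * (m ^ n * κ) ≤ Ψ * (2 * M) := by linarith
  have h6 := le_of_mul_le_mul_left h5 hΨ0
  rw [hM, mul_div_assoc', le_div_iff₀ (by positivity)] at h6
  linarith

end averaging

section substitution

variable {n m D ψ : ℕ} {F : Type*} [Field F]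

/-- The substitution undoing the translation by `a` and replacing each variable by the sum of the
variables that `σ` sends to it. -/
noncomputable def restrictSubst (a : Fin n × ZMod ψ → F) (σ : Fin n × Fin m → ZMod ψ)
    (v : Fin n × ZMod ψ) : MvPolynomial (Fin n × Fin m) F :=
  C (-a v) + ∑ j ∈ Finset.univ.filter fun j => σ (v.1, j) = v.2, X (v.1, j)

theorem vars_restrictSubst (a : Fin n × ZMod ψ → F) (σ : Fin n × Fin m → ZMod ψ)
    (Q : MvPolynomial (Fin n × ZMod ψ) F) :
    (bind₁ (restrictSubst a σ) Q).vars ⊆ hitSet σ Q.vars := by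
  classical
  intro w hw
  obtain ⟨v, hv, hw⟩ := Finset.mem_biUnion.mp (vars_bind₁ _ _ hw)
  rcases Finset.mem_union.mp (vars_add_subset _ _ hw) with h | h
  · simp at h
  · obtain ⟨j, hj, hwj⟩ := Finset.mem_biUnion.mp (vars_sum_subset _ _ h)
    rw [vars_X, Finset.mem_singleton] at hwj
    subst hwj
    rw [hitSet, Finset.mem_filter, (Finset.mem_filter.mp hj).2]
    exact ⟨Finset.mem_univ _, hv⟩

variable [Fact ψ.Prime]

theorem restrictSubst_code (hDn : D ≤ n) (hnψ : n ≤ ψ) (a : Fin n × ZMod ψ → F)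
    (σ : Fin n × Fin m → ZMod ψ) :
    bind₁ (restrictSubst a σ) (aeval (fun v => X v + C (a v))
      (∑ c : Fin D → ZMod ψ, ∏ i : Fin n, (X (i, codeEval c i) : MvPolynomial _ F))) =
      codePoly F (restrictedCode D σ) := by
  have hset : restrictedCode D σ = (Finset.univ : Finset (Fin D → ZMod ψ)).biUnion fun c =>
      Fintype.piFinset fun i => Finset.univ.filter fun j => σ (i, j) = codeEval c i := by
    ext b
    simp [mem_restrictedCode, eq_comm]
  rw [codePoly, hset, Finset.sum_biUnion]
  · simp only [map_sum, map_prod, aeval_X, map_add, bind₁_X_right, bind₁_C_right, restrictSubst]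
    refine Finset.sum_congr rfl fun c _ => ?_
    refine Eq.trans ?_ (Finset.prod_univ_sum _ fun i j => X (i, j))
    refine Finset.prod_congr rfl fun i _ => ?_
    rw [C_neg]
    ring
  · intro c _ c' _ hne
    rw [Function.onFun, Finset.disjoint_left]
    intro b hb hb'
    refine hne (codeEval_injective hDn hnψ (funext fun i => ?_))
    have h1 := (Finset.mem_filter.mp (Fintype.mem_piFinset.mp hb i)).2
    have h2 := (Finset.mem_filter.mp (Fintype.mem_piFinset.mp hb' i)).2
    exact h1.symm.trans h2

theorem le_card_of_translate_eq [Infinite F] {T d r : ℕ} (hDn : D ≤ n) (hnψ : n ≤ ψ) (hr : r ≤ D)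
    (K : Finset (Fin n)) (a : Fin n × ZMod ψ → F)
    (Q : Fin T → Fin d → MvPolynomial (Fin n × ZMod ψ) F)
    (hQ : aeval (fun v => X v + C (a v))
      (∑ c : Fin D → ZMod ψ, ∏ i : Fin n, (X (i, codeEval c i) : MvPolynomial _ F)) =
        ∑ i, ∏ j, Q i j) {s : ℝ}
    (hs : ∀ i j, ((Q i j).vars.card : ℝ) ≤ s) {x κ : ℝ} (hx : 0 < x) (hx1 : x ≤ 1)
    (hκ : κ = ψ ^ D * (1 / ψ) ^ n)
    (hsmall : κ * (1 + m * (1 / (1 + x))) ^ Kᶜ.card +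
      κ * m ^ K.card * (1 + m * (x / (1 + x))) ^ Kᶜ.card + 2 * ((1 + m * (1 / ψ)) ^ n - 1) +
      T * d * (m * s / ψ) ^ r ≤ 1 / 2) :
    κ * m ^ n * (1 / (1 + x)) ^ Kᶜ.card * x ^ (K.card * r) ≤ 2 * (n * m + 1) * T := by
  refine le_card_of_restrictions (F := F) hDn hnψ hr K (fun i j => (Q i j).vars) hs
    (fun σ => ⟨fun i j => bind₁ (restrictSubst a σ) (Q i j), ?_, fun i j =>
      vars_restrictSubst a σ (Q i j)⟩) hx hx1 hκ hsmall
  rw [← restrictSubst_code hDn hnψ a σ, hQ]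
  simp only [map_sum, map_prod]

end substitution

/-! ## The choice of parameters -/

section parameters

theorem nwGamma_mul {μ : ℝ} (hμ1 : μ < 1) : (2 + nwGamma μ) * (1 - μ) = 6 := by
  have h : 1 - (μ + (1 - μ) / 2) = (1 - μ) / 2 := by ring
  have h2 : 1 - μ ≠ 0 := by linarith
  rw [nwGamma, h]
  field_simp
  ring

theorem four_le_nwGamma {μ : ℝ} (hμ0 : 0 ≤ μ) (hμ1 : μ < 1) : 4 ≤ nwGamma μ := by
  have h := nwGamma_mul hμ1
  nlinarith

theorem nwDreal_bounds {μ : ℝ} (hμ0 : 0 ≤ μ) (hμ1 : μ < 1) {n ψ : ℕ} (hL : 1 ≤ Real.log n)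
    (hψ : 0 < ψ) (hlo : (1 + nwGamma μ) * Real.log n ≤ Real.log ψ)
    (hhi : Real.log ψ ≤ (1 + nwGamma μ) * Real.log n + 1) :
    nwDreal μ n (n * ψ) ≤ n ∧ n - nwDreal μ n (n * ψ) ≤ 3 * n / (2 * (1 + nwGamma μ)) ∧
      3 / 2 * n * Real.log n - n ≤ (n - nwDreal μ n (n * ψ)) * Real.log ψ := by
  have hγ := four_le_nwGamma hμ0 hμ1
  have hγμ := nwGamma_mul hμ1
  set γ := nwGamma μ with hγdef
  set L := Real.log n with hLdef
  set P := Real.log ψ with hPdef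
  have hn : (n : ℝ) ≠ 0 := by
    rintro h
    rw [hLdef, h, Real.log_zero] at hL
    linarith
  have hN : Real.log ((n * ψ : ℕ) : ℝ) = L + P := by
    rw [Nat.cast_mul, Real.log_mul hn (Nat.cast_ne_zero.mpr hψ.ne')]
  obtain ⟨e, he⟩ : ∃ e, P = (1 + γ) * L + e := ⟨P - (1 + γ) * L, by ring⟩
  have he0 : 0 ≤ e := by linarith
  have he1 : e ≤ 1 := by linarith
  have hkey : n - nwDreal μ n (n * ψ) = n * (3 - (1 + μ) / 2 * (e / L)) / (2 * (1 + γ)) := by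
    rw [nwDreal, hN, ← hLdef, ← hγdef, he]
    have h1 : 1 + γ ≠ 0 := by linarith
    have h2 : L ≠ 0 := by linarith
    field_simp
    nlinarith
  have heL : e / L ≤ 1 := (div_le_one (by linarith)).mpr (by linarith)
  have heL0 : 0 ≤ e / L := div_nonneg he0 (by linarith)
  have heLL : e / L * L = e := div_mul_cancel₀ _ (by linarith)
  have hn0 : (0 : ℝ) ≤ n := Nat.cast_nonneg n
  have hσ0 : 0 ≤ (1 + μ) / 2 * (e / L) := by positivity
  have hσ1 : (1 + μ) / 2 * (e / L) ≤ e / L := by nlinarith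
  refine ⟨?_, ?_, ?_⟩
  · rw [← sub_nonneg, hkey]
    exact div_nonneg (mul_nonneg hn0 (by linarith)) (by linarith)
  · rw [hkey]
    refine div_le_div_of_nonneg_right ?_ (by linarith)
    nlinarith
  · rw [hkey, div_mul_eq_mul_div (n * (3 - (1 + μ) / 2 * (e / L))), le_div_iff₀ (by linarith)]
    have h1 : n * (3 - (1 + μ) / 2 * (e / L)) * ((1 + γ) * L) ≤
        n * (3 - (1 + μ) / 2 * (e / L)) * P :=
      mul_le_mul_of_nonneg_left hlo (mul_nonneg hn0 (by linarith))
    refine le_trans ?_ h1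
    have h2 : (1 + μ) / 2 * (e / L) * L ≤ 1 := by nlinarith
    have h3 : 0 ≤ n * (1 + γ) := mul_nonneg hn0 (by linarith)
    nlinarith [mul_le_mul_of_nonneg_left h2 h3]

theorem one_add_pow_le_mul_exp {t : ℝ} (ht : 0 < t) (N : ℕ) :
    (1 + t) ^ N ≤ t ^ N * Real.exp (N / t) := by
  have h : 1 + t ≤ t * Real.exp (1 / t) := by
    have := mul_le_mul_of_nonneg_left (Real.add_one_le_exp (1 / t)) ht.le
    have h2 : t * (1 / t + 1) = 1 + t := by field_simp
    linarith
  calc (1 + t) ^ N ≤ (t * Real.exp (1 / t)) ^ N := pow_le_pow_left₀ (by positivity) h _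
    _ = _ := by rw [mul_pow, ← Real.exp_nat_mul, mul_one_div]

theorem exists_scale {κ q : ℝ} {n N : ℕ} (hκ : 0 < κ) (hq : 1 / 2 ≤ q) (hq1 : q ≤ 1) (hNn : N ≤ n)
    (hn : 0 < n) (hlo : κ * (n : ℝ) ^ N ≤ 1 / 200)
    (hhi : 1 / 200 < κ * ((n : ℝ) ^ 2 / 2) ^ N) :
    ∃ m : ℕ, n ≤ m ∧ m ≤ n ^ 2 ∧ κ * (m * q) ^ N ≤ 1 / 200 ∧ 1 / 600 ≤ κ * (m * q) ^ N := by
  classical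
  have hP : κ * ((n : ℝ) * q) ^ N ≤ 1 / 200 := by
    refine le_trans (mul_le_mul_of_nonneg_left (pow_le_pow_left₀ (by positivity) ?_ _) hκ.le) hlo
    exact mul_le_of_le_one_right (Nat.cast_nonneg n) hq1
  have hle : n ≤ n ^ 2 := Nat.le_self_pow two_ne_zero n
  set m := Nat.findGreatest (fun m : ℕ => κ * ((m : ℝ) * q) ^ N ≤ 1 / 200) (n ^ 2) with hm
  have hnm : n ≤ m := Nat.le_findGreatest hle hP
  have hmn : m ≤ n ^ 2 := Nat.findGreatest_le _
  have hPm : κ * ((m : ℝ) * q) ^ N ≤ 1 / 200 :=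
    Nat.findGreatest_spec (P := fun m : ℕ => κ * ((m : ℝ) * q) ^ N ≤ 1 / 200) hle hP
  refine ⟨m, hnm, hmn, hPm, ?_⟩
  have hne : m ≠ n ^ 2 := by
    intro h
    have : κ * ((n : ℝ) ^ 2 / 2) ^ N ≤ κ * ((m : ℝ) * q) ^ N := by
      refine mul_le_mul_of_nonneg_left (pow_le_pow_left₀ (by positivity) ?_ _) hκ.le
      rw [h]
      push_cast
      have : (0 : ℝ) ≤ (n : ℝ) ^ 2 := by positivity
      nlinarith
    linarith
  have hsucc : ¬ κ * (((m + 1 : ℕ) : ℝ) * q) ^ N ≤ 1 / 200 :=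
    Nat.findGreatest_is_greatest (P := fun m : ℕ => κ * ((m : ℝ) * q) ^ N ≤ 1 / 200)
      (n := n ^ 2) (Nat.lt_succ_self m) (by omega)
  have hm0 : (0 : ℝ) < m := Nat.cast_pos.mpr (hn.trans_le hnm)
  have h1 : ((m + 1 : ℕ) : ℝ) ^ N ≤ (m : ℝ) ^ N * 3 := by
    have h := one_add_pow_le_mul_exp hm0 N
    have h2 : Real.exp (N / m) ≤ Real.exp 1 := by
      refine Real.exp_le_exp.mpr ((div_le_one hm0).mpr ?_)
      exact_mod_cast hNn.trans hnm
    have h3 := Real.exp_one_lt_d9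
    push_cast
    rw [add_comm]
    refine h.trans (mul_le_mul_of_nonneg_left (by linarith) (by positivity))
  rw [mul_pow] at hsucc ⊢
  have h2 : κ * (((m + 1 : ℕ) : ℝ) ^ N * q ^ N) ≤ κ * ((m : ℝ) ^ N * 3 * q ^ N) := by
    gcongr
  push Not at hsucc
  linarith

end parameters

section estimates

theorem exp_two_lt : Real.exp 2 < 7.4 := by
  have h := Real.exp_one_lt_d9
  have h0 := Real.exp_pos 1
  rw [show (2 : ℝ) = 1 + 1 by norm_num, Real.exp_add]
  nlinarith

theorem exp_three_lt : Real.exp 3 < 20.2 := by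
  have h := Real.exp_one_lt_d9
  have h2 := exp_two_lt
  have h0 := Real.exp_pos 1
  rw [show (3 : ℝ) = 2 + 1 by norm_num, Real.exp_add]
  nlinarith

theorem exp_neg_le_of_le {t c : ℝ} (hc : 0 < c) (h : c ≤ t) : Real.exp (-t) ≤ 1 / c := by
  rw [Real.exp_neg, ← one_div]
  exact one_div_le_one_div_of_le hc (by linarith [Real.add_one_le_exp t])

theorem density_bounds {n D k ψ : ℕ} {γ : ℝ} (hγ : 0 ≤ γ) (hψ : 0 < ψ) (hDn : D ≤ n)
    (hk : (k : ℝ) ≤ √n) (hkn : k ≤ n) (hL : 16 ≤ Real.log n) (hn : 12 + 4 * γ ≤ √n)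
    (hlow : 3 / 2 * n * Real.log n - n ≤ (n - D) * Real.log ψ)
    (hup : n - D ≤ 3 * (n : ℝ) / (2 * (1 + γ)) + 1)
    (hP : Real.log ψ ≤ (1 + γ) * Real.log n + 1) :
    (ψ : ℝ) ^ D * (1 / ψ) ^ n * (n : ℝ) ^ (n - k) ≤ 1 / 200 ∧
      1 / 200 < (ψ : ℝ) ^ D * (1 / ψ) ^ n * ((n : ℝ) ^ 2 / 2) ^ (n - k) := by
  set S := √(n : ℝ) with hS
  have hSS : S * S = n := Real.mul_self_sqrt (Nat.cast_nonneg n)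
  have hn0 : (0 : ℝ) < n := by nlinarith
  have hψ0 : (0 : ℝ) < ψ := Nat.cast_pos.mpr hψ
  set L := Real.log n with hLdef
  set P := Real.log ψ with hPdef
  have hnL : (n : ℝ) = Real.exp L := (Real.exp_log hn0).symm
  have hκ : (ψ : ℝ) ^ D * (1 / ψ) ^ n = Real.exp (-((n - D) * P)) := by
    have hψP : (ψ : ℝ) = Real.exp P := (Real.exp_log hψ0).symm
    rw [hψP, one_div, ← Real.exp_neg, ← Real.exp_nat_mul, ← Real.exp_nat_mul, ← Real.exp_add]
    congr 1
    ring
  have hkc : ((n - k : ℕ) : ℝ) = n - k := Nat.cast_sub hkn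
  have hk0 : (0 : ℝ) ≤ k := Nat.cast_nonneg k
  have hnD : (0 : ℝ) ≤ n - D := by
    rw [sub_nonneg]
    exact_mod_cast hDn
  constructor
  · have : (n : ℝ) ^ (n - k) = Real.exp ((n - k) * L) := by
      rw [← hkc, Real.exp_nat_mul, ← hnL]
    rw [hκ, this, ← Real.exp_add]
    have h1 : (200 : ℝ) ≤ (n - D) * P - (n - k) * L := by nlinarith
    refine le_trans (le_of_eq ?_) (exp_neg_le_of_le (by norm_num) h1)
    congr 1
    ring
  · have hbase : Real.exp (2 * L - 1) ≤ (n : ℝ) ^ 2 / 2 := by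
      rw [Real.exp_sub, show Real.exp (2 * L) = (n : ℝ) ^ 2 by
        rw [← Nat.cast_two, Real.exp_nat_mul, ← hnL]]
      exact div_le_div_of_nonneg_left (by positivity) (by norm_num)
        (by linarith [Real.add_one_le_exp 1])
    have hpow : Real.exp ((n - k) * (2 * L - 1)) ≤ ((n : ℝ) ^ 2 / 2) ^ (n - k) := by
      rw [← hkc, Real.exp_nat_mul]
      exact pow_le_pow_left₀ (Real.exp_pos _).le hbase _
    have h1 : (n - D) * P ≤ 3 / 2 * n * L + 3 / 2 * n + (1 + γ) * L + 1 := by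
      have h2 : (n - D) * P ≤ (3 * (n : ℝ) / (2 * (1 + γ)) + 1) * ((1 + γ) * L + 1) :=
        (mul_le_mul_of_nonneg_left hP hnD).trans
          (mul_le_mul_of_nonneg_right hup (by positivity))
      have h3 : 3 * (n : ℝ) / (2 * (1 + γ)) * (1 + γ) = 3 / 2 * n := by field_simp
      have h4 : 3 * (n : ℝ) / (2 * (1 + γ)) ≤ 3 / 2 * n := by
        rw [← h3]
        exact le_mul_of_one_le_right (by positivity) (by linarith)
      nlinarith
    have h5 : 3 / 2 * n * L + 3 / 2 * n + (1 + γ) * L + 1 ≤ (n - k) * (2 * L - 1) := by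
      have h6 : (n - S) * (2 * L - 1) ≤ (n - k) * (2 * L - 1) :=
        mul_le_mul_of_nonneg_right (by linarith) (by linarith)
      refine le_trans ?_ h6
      have h7 : (12 + 4 * γ) * S * L ≤ S * S * L := by gcongr
      have h8 : (1 + γ) * L ≤ (1 + γ) * S * L := by
        have : 1 ≤ S := by linarith
        gcongr
        nlinarith
      have h9 : 16 * (S * S) ≤ L * (S * S) := by gcongr
      rw [← hSS]
      nlinarith
    calc (1 : ℝ) / 200 < 1 := by norm_num
      _ ≤ Real.exp (-((n - D) * P) + (n - k) * (2 * L - 1)) := Real.one_le_exp (by linarith)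
      _ ≤ _ := by
        rw [Real.exp_add, hκ]
        exact mul_le_mul_of_nonneg_left hpow (Real.exp_pos _).le

theorem conflict_terms_le {n m k N : ℕ} {κ x : ℝ} (hκ : 0 ≤ κ) (hx : 1 / 2 ≤ x) (hx1 : x ≤ 1)
    (hNn : N ≤ n) (hnm : n ≤ m) (hn : 0 < n) (hm : κ * (m * (1 / (1 + x))) ^ N ≤ 1 / 200)
    (hkx : (m : ℝ) ^ k * x ^ N ≤ 1) :
    κ * (1 + m * (1 / (1 + x))) ^ N + κ * m ^ k * (1 + m * (x / (1 + x))) ^ N ≤ 1 / 6 := by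
  have hm0 : (0 : ℝ) < m := Nat.cast_pos.mpr (hn.trans_le hnm)
  have hNm : (N : ℝ) ≤ m := by exact_mod_cast hNn.trans hnm
  have hq : 1 / 2 ≤ 1 / (1 + x) := one_div_le_one_div_of_le (by linarith) (by linarith)
  have hp : 1 / 3 ≤ x / (1 + x) := by
    rw [div_le_div_iff₀ (by norm_num) (by linarith)]
    linarith
  have hmain : ∀ t c : ℝ, 1 / c ≤ t → 0 < c → (1 + m * t) ^ N ≤ (m * t) ^ N * Real.exp c := by
    intro t c htc hc
    have ht : 0 < t := lt_of_lt_of_le (by positivity) htc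
    refine (one_add_pow_le_mul_exp (mul_pos hm0 ht) N).trans
      (mul_le_mul_of_nonneg_left (Real.exp_le_exp.mpr ?_) (by positivity))
    rw [div_le_iff₀ (mul_pos hm0 ht)]
    have : 1 ≤ c * t := by rwa [div_le_iff₀' hc] at htc
    nlinarith
  have h1 : κ * (1 + m * (1 / (1 + x))) ^ N ≤ 1 / 200 * Real.exp 2 := by
    refine (mul_le_mul_of_nonneg_left (hmain _ 2 hq (by norm_num)) hκ).trans ?_
    rw [← mul_assoc]
    exact mul_le_mul_of_nonneg_right hm (Real.exp_pos _).le
  have h2 : κ * m ^ k * (1 + m * (x / (1 + x))) ^ N ≤ 1 / 200 * Real.exp 3 := by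
    refine (mul_le_mul_of_nonneg_left (hmain _ 3 hp (by norm_num)) (by positivity)).trans ?_
    rw [← mul_assoc]
    refine mul_le_mul_of_nonneg_right ?_ (Real.exp_pos _).le
    calc κ * m ^ k * (m * (x / (1 + x))) ^ N =
        κ * (m * (1 / (1 + x))) ^ N * (m ^ k * x ^ N) := by
          rw [show m * (x / (1 + x)) = m * (1 / (1 + x)) * x by ring, mul_pow _ x]
          ring
      _ ≤ κ * (m * (1 / (1 + x))) ^ N * 1 := mul_le_mul_of_nonneg_left hkx (by positivity)
      _ ≤ _ := by rwa [mul_one]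
  have := exp_two_lt
  have := exp_three_lt
  linarith

theorem collision_term_le {n m ψ : ℕ} (hn : 6 ≤ n) (hm : m ≤ n ^ 2) (hψ : (n : ℝ) ^ 5 ≤ ψ) :
    2 * ((1 + (m : ℝ) * (1 / ψ)) ^ n - 1) ≤ 1 / 6 := by
  have hn' : (6 : ℝ) ≤ n := by exact_mod_cast hn
  have hn0 : (0 : ℝ) < n := by linarith
  have hψ0 : (0 : ℝ) < ψ := lt_of_lt_of_le (by positivity) hψ
  have hm' : (m : ℝ) ≤ n ^ 2 := by exact_mod_cast hm
  set t : ℝ := n * (m * (1 / ψ)) with ht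
  have ht1 : t ≤ 1 / 36 := by
    rw [ht, mul_one_div, mul_div_assoc', div_le_div_iff₀ hψ0 (by norm_num)]
    have h1 : (n : ℝ) * m ≤ n * n ^ 2 := by gcongr
    have h2 : (n : ℝ) ^ 3 * 36 ≤ n ^ 3 * (n * n) := by
      gcongr
      nlinarith
    nlinarith
  have h1 : (1 + (m : ℝ) * (1 / ψ)) ^ n ≤ Real.exp t := by
    rw [ht, Real.exp_nat_mul]
    refine pow_le_pow_left₀ (by positivity) ?_ _
    rw [add_comm]
    exact Real.add_one_le_exp _
  have h2 : Real.exp t * (35 / 36) ≤ 1 := by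
    have h3 : (35 : ℝ) / 36 ≤ Real.exp (-t) := by linarith [Real.add_one_le_exp (-t)]
    calc Real.exp t * (35 / 36) ≤ Real.exp t * Real.exp (-t) :=
          mul_le_mul_of_nonneg_left h3 (Real.exp_pos _).le
      _ = 1 := by rw [← Real.exp_add, add_neg_cancel, Real.exp_zero]
  linarith

theorem sparsity_term_le {μ : ℝ} (hμ0 : 0 ≤ μ) (hμ1 : μ < 1) {n m r ψ : ℕ} {Y : ℝ} (hψ : 0 < ψ)
    (hm : m ≤ n ^ 2) (hL : 16 ≤ Real.log n) (hn : 2 ≤ √n) (hr : √n ≤ r + 1)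
    (hlo : (1 + nwGamma μ) * Real.log n ≤ Real.log ψ)
    (hY : Y ≤ Real.exp (Real.log n * √n / 48)) :
    Y * (m * ((n * ψ : ℕ) : ℝ) ^ μ / ψ) ^ r ≤ 1 / 6 := by
  have hγμ := nwGamma_mul hμ1
  have hγ := four_le_nwGamma hμ0 hμ1
  have hSS : √n * √n = n := Real.mul_self_sqrt (Nat.cast_nonneg n)
  have hn0 : (0 : ℝ) < n := by nlinarith
  have hψ0 : (0 : ℝ) < ψ := Nat.cast_pos.mpr hψ
  set S := √(n : ℝ)
  set L := Real.log n
  set P := Real.log ψ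
  have hnL : (n : ℝ) = Real.exp L := (Real.exp_log hn0).symm
  have hψP : (ψ : ℝ) = Real.exp P := (Real.exp_log hψ0).symm
  have hm' : (m : ℝ) ≤ Real.exp (2 * L) := by
    rw [← Nat.cast_two, Real.exp_nat_mul, ← hnL]
    exact_mod_cast hm
  have hbase : m * ((n * ψ : ℕ) : ℝ) ^ μ / ψ ≤ Real.exp (-(2 * L)) := by
    rw [Nat.cast_mul, hnL, hψP, ← Real.exp_add, ← Real.exp_mul, mul_div_assoc, ← Real.exp_sub]
    refine (mul_le_mul_of_nonneg_right hm' (Real.exp_pos _).le).trans ?_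
    rw [← Real.exp_add]
    refine Real.exp_le_exp.mpr ?_
    nlinarith
  calc Y * (m * ((n * ψ : ℕ) : ℝ) ^ μ / ψ) ^ r
      ≤ Real.exp (L * S / 48) * Real.exp (-(2 * L)) ^ r :=
        mul_le_mul hY (pow_le_pow_left₀ (by positivity) hbase _) (by positivity)
          (Real.exp_pos _).le
    _ = Real.exp (-(r * (2 * L) - L * S / 48)) := by
        rw [← Real.exp_nat_mul, ← Real.exp_add]
        congr 1
        ring
    _ ≤ 1 / 6 := by
        refine exp_neg_le_of_le (by norm_num) ?_
        have h1 : L * S ≤ r * (2 * L) := by nlinarith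
        nlinarith

end estimates

section conclusion

theorem exists_bias {n k r N : ℕ} (hkr : 4 * k ≤ r) (hr : (r : ℝ) ≤ √n) (hN : N + k = n)
    (hn : 1 ≤ √n) (hL0 : 0 ≤ Real.log n) (hL : Real.log n ≤ √n / 2) :
    ∃ x : ℝ, 1 / 2 ≤ x ∧ x ≤ 1 ∧ (∀ m : ℕ, m ≤ n ^ 2 → (m : ℝ) ^ k * x ^ N ≤ 1) ∧
      Real.exp (-(2 * k * Real.log n / 3)) ≤ x ^ (k * r) := by
  have hSS : √n * √n = n := Real.mul_self_sqrt (Nat.cast_nonneg n)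
  have hn0 : (0 : ℝ) < n := by nlinarith
  set S := √(n : ℝ)
  set L := Real.log n
  have hnL : (n : ℝ) = Real.exp L := (Real.exp_log hn0).symm
  have hk0 : (0 : ℝ) ≤ k := Nat.cast_nonneg k
  have hr0 : (0 : ℝ) ≤ r := Nat.cast_nonneg r
  have hkr' : 4 * (k : ℝ) ≤ r := by exact_mod_cast hkr
  have hN' : (N : ℝ) + k = n := by exact_mod_cast hN
  have hN34 : 3 / 4 * (n : ℝ) ≤ N := by nlinarith
  have hN0 : (0 : ℝ) < N := by linarith
  set e := 2 * k * L / N with he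
  have heN : e * N = 2 * k * L := div_mul_cancel₀ _ hN0.ne'
  have he0 : 0 ≤ e := by positivity
  have he1 : e ≤ 1 / 3 := by
    rw [he, div_le_div_iff₀ hN0 (by norm_num)]
    have : (k : ℝ) * L ≤ S / 4 * (S / 2) := mul_le_mul (by linarith) hL hL0 (by linarith)
    nlinarith
  refine ⟨Real.exp (-e), by linarith [Real.add_one_le_exp (-e)],
    Real.exp_le_one_iff.mpr (by linarith), fun m hm => ?_, ?_⟩
  · have hm' : (m : ℝ) ≤ Real.exp (2 * L) := by
      rw [← Nat.cast_two, Real.exp_nat_mul, ← hnL]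
      exact_mod_cast hm
    calc (m : ℝ) ^ k * Real.exp (-e) ^ N ≤ Real.exp (2 * L) ^ k * Real.exp (-e) ^ N := by gcongr
      _ = 1 := by
        rw [← Real.exp_nat_mul, ← Real.exp_nat_mul, ← Real.exp_add, Real.exp_eq_one_iff]
        linarith
  · rw [← Real.exp_nat_mul]
    refine Real.exp_le_exp.mpr ?_
    have h1 : (k : ℝ) * r ≤ N / 3 := by
      have : (k : ℝ) * r ≤ S / 4 * S := mul_le_mul (by linarith) hr hr0 (by linarith)
      nlinarith
    have h2 : (k : ℝ) * r * e ≤ N / 3 * e := mul_le_mul_of_nonneg_right h1 he0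
    push_cast
    linarith

theorem exp_le_of_weight_le {n m k r N : ℕ} {κ q x Y : ℝ} (hY : 0 ≤ Y)
    (hn : 1000 ≤ √n) (hkn : √n ≤ 4 * k + 4) (hN : N + k = n) (hnm : n ≤ m) (hm : m ≤ n ^ 2)
    (hκm : 1 / 600 ≤ κ * (m * q) ^ N) (hxk : Real.exp (-(2 * k * Real.log n / 3)) ≤ x ^ (k * r))
    (hle : κ * m ^ n * q ^ N * x ^ (k * r) ≤ 2 * (n * m + 1) * Y) :
    Real.exp (Real.log n * √n / 48) ≤ Y := by
  have hSS : √n * √n = n := Real.mul_self_sqrt (Nat.cast_nonneg n)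
  have hn0 : (1000000 : ℝ) ≤ n := by nlinarith
  have hL0 : 0 ≤ Real.log n := Real.log_nonneg (by linarith)
  set S := √(n : ℝ)
  set L := Real.log n
  have hnL : (n : ℝ) = Real.exp L := (Real.exp_log (by linarith)).symm
  have hnm' : (n : ℝ) ≤ m := by exact_mod_cast hnm
  have hm' : (m : ℝ) ≤ n ^ 2 := by exact_mod_cast hm
  have hmk : Real.exp (k * L) ≤ (m : ℝ) ^ k := by
    rw [Real.exp_nat_mul, ← hnL]
    gcongr
  have hlow : 1 / 600 * Real.exp (k * L / 3) ≤ κ * m ^ n * q ^ N * x ^ (k * r) := by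
    calc 1 / 600 * Real.exp (k * L / 3)
        = 1 / 600 * (Real.exp (k * L) * Real.exp (-(2 * k * L / 3))) := by
          rw [← Real.exp_add]
          ring_nf
      _ ≤ κ * (m * q) ^ N * (m ^ k * x ^ (k * r)) := by gcongr
      _ = _ := by
          rw [← hN, pow_add, mul_pow]
          ring
  have hup : 2 * (n * m + 1) * Y ≤ 4 * n ^ 3 * Y := by
    refine mul_le_mul_of_nonneg_right ?_ hY
    linarith [mul_le_mul_of_nonneg_left hm' (by linarith : (0 : ℝ) ≤ n),
      one_le_pow₀ (n := 3) (by linarith : (1 : ℝ) ≤ n), show (n : ℝ) ^ 3 = n * n ^ 2 by ring]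
  have hmain : Real.exp (k * L / 3) ≤ (n : ℝ) ^ 4 * Y := by
    have : 2400 * ((n : ℝ) ^ 3 * Y) ≤ n * ((n : ℝ) ^ 3 * Y) := by
      gcongr
      linarith
    linarith [show (n : ℝ) ^ 4 * Y = n * ((n : ℝ) ^ 3 * Y) by ring]
  have hn4 : (n : ℝ) ^ 4 = Real.exp (4 * L) := by
    rw [hnL, ← Real.exp_nat_mul]
    norm_num
  rw [hn4, ← div_le_iff₀' (Real.exp_pos _), ← Real.exp_sub] at hmain
  refine (Real.exp_le_exp.mpr ?_).trans hmain
  have h1 : (S / 48 + 4) * L ≤ k / 3 * L := by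
    gcongr
    linarith
  linarith

theorem exp_le_mul_of_translate_eq {F : Type*} [Field F] [CharZero F] {μ : ℝ} (hμ0 : 0 ≤ μ)
    (hμ1 : μ < 1) {n ψ T d : ℕ} [Fact ψ.Prime] (hn : 1000 ≤ √n) (hnγ : 12 + 4 * nwGamma μ ≤ √n)
    (hL : 16 ≤ Real.log n) (hLn : Real.log n ≤ √n / 2)
    (hlo : (1 + nwGamma μ) * Real.log n ≤ Real.log ψ)
    (hhi : Real.log ψ ≤ (1 + nwGamma μ) * Real.log n + 1) (hd : 1 ≤ d)
    (a : Fin n × ZMod ψ → F) (Q : Fin T → Fin d → MvPolynomial (Fin n × ZMod ψ) F)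
    (hs : ∀ i j, ((Q i j).vars.card : ℝ) ≤ ((n * ψ : ℕ) : ℝ) ^ μ)
    (hQ : aeval (fun v => X v + C (a v)) (NWpoly F μ n ψ) = ∑ i, ∏ j, Q i j) :
    Real.exp (Real.log n * √n / 48) ≤ T * d := by
  by_contra! hlt
  have hγ := four_le_nwGamma hμ0 hμ1
  have hSS : √n * √n = n := Real.mul_self_sqrt (Nat.cast_nonneg n)
  have hn0 : (1000000 : ℝ) ≤ n := by nlinarith
  have hnpos : 0 < n := by
    have : (0 : ℝ) < n := by linarith
    exact_mod_cast this
  have hψ : 0 < ψ := (Fact.out : ψ.Prime).pos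
  have hψ0 : (0 : ℝ) < ψ := Nat.cast_pos.mpr hψ
  have hψ5 : (n : ℝ) ^ 5 ≤ ψ := by
    rw [← Real.log_le_log_iff (by positivity) hψ0, Real.log_pow]
    refine le_trans ?_ hlo
    push_cast
    gcongr
    linarith
  have hnψ : n ≤ ψ := by
    have : n ^ 5 ≤ ψ := by exact_mod_cast hψ5
    exact (Nat.le_self_pow (by norm_num) n).trans this
  obtain ⟨hDn, hDup, hDlow⟩ := nwDreal_bounds hμ0 hμ1 (by linarith) hψ hlo hhi
  have hD0 : 7 / 10 * (n : ℝ) ≤ nwDreal μ n (n * ψ) := by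
    have : 3 * (n : ℝ) / (2 * (1 + nwGamma μ)) ≤ 3 / 10 * n := by
      rw [div_le_iff₀ (by linarith)]
      nlinarith
    linarith
  have hfl := Nat.floor_le (by linarith : 0 ≤ nwDreal μ n (n * ψ))
  have hfl' := Nat.lt_floor_add_one (nwDreal μ n (n * ψ))
  have hQ' : aeval (fun v => X v + C (a v))
      (∑ c : Fin ⌊nwDreal μ n (n * ψ)⌋₊ → ZMod ψ,
        ∏ i : Fin n, (X (i, codeEval c i) : MvPolynomial _ F)) = ∑ i, ∏ j, Q i j := hQ
  generalize nwDreal μ n (n * ψ) = Δ at *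
  set D := ⌊Δ⌋₊
  have hDn' : D ≤ n := by exact_mod_cast hfl.trans hDn
  have hrS : (Nat.sqrt n : ℝ) ≤ √n := Real.nat_sqrt_le_real_sqrt
  have hrS' : √n ≤ Nat.sqrt n + 1 := Real.real_sqrt_le_nat_sqrt_succ
  set r := Nat.sqrt n
  have hrD : r ≤ D := by
    have : (r : ℝ) ≤ D := by nlinarith
    exact_mod_cast this
  obtain ⟨k, hk4, hk4'⟩ : ∃ k, 4 * k ≤ r ∧ r ≤ 4 * k + 3 := ⟨r / 4, by omega, by omega⟩
  have hk4r : 4 * (k : ℝ) ≤ r := by exact_mod_cast hk4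
  have hk4r' : (r : ℝ) ≤ 4 * k + 3 := by exact_mod_cast hk4'
  have hk0 : (0 : ℝ) ≤ k := Nat.cast_nonneg k
  have hkn : k ≤ n := by omega
  obtain ⟨K, -, hK⟩ := Finset.exists_subset_card_eq
    (s := (Finset.univ : Finset (Fin n))) (n := k) (by simpa using hkn)
  have hKc : Kᶜ.card = n - k := by rw [Finset.card_compl, hK, Fintype.card_fin]
  have hNk : n - k + k = n := Nat.sub_add_cancel hkn
  obtain ⟨x, hx, hx1, hxm, hxk⟩ := exists_bias hk4 hrS hNk (by linarith) (by linarith) hLn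
  have hlog : 0 ≤ Real.log ψ := le_trans (by positivity) hlo
  have hden := density_bounds (by linarith) hψ hDn' (by linarith : (k : ℝ) ≤ √n) hkn hL hnγ
    (hDlow.trans (mul_le_mul_of_nonneg_right (by linarith) hlog)) (by linarith) hhi
  have hκ : (0 : ℝ) < ψ ^ D * (1 / ψ) ^ n := by positivity
  have hq : 1 / 2 ≤ 1 / (1 + x) := one_div_le_one_div_of_le (by linarith) (by linarith)
  have hq1 : 1 / (1 + x) ≤ 1 := (div_le_one (by linarith)).mpr (by linarith)
  obtain ⟨m, hnm, hm, hm1, hm2⟩ :=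
    exists_scale hκ hq hq1 (Nat.sub_le n k) hnpos hden.1 hden.2
  have h1 := conflict_terms_le hκ.le hx hx1 (Nat.sub_le n k) hnm hnpos hm1 (hxm m hm)
  have h2 := collision_term_le (n := n) (by
    have : (6 : ℝ) ≤ n := by linarith
    exact_mod_cast this) hm hψ5
  have h3 := sparsity_term_le hμ0 hμ1 hψ hm hL (by linarith) hrS' hlo hlt.le
  have hle := le_card_of_translate_eq (m := m) hDn' hnψ hrD K a Q hQ' hs (by linarith) hx1 rfl
    (by rw [hKc, hK]; linarith)
  rw [hKc, hK] at hle
  have hT := exp_le_of_weight_le (Nat.cast_nonneg T) hn (by linarith)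
    hNk hnm hm hm2 hxk hle
  have hTd : (T : ℝ) ≤ T * d := le_mul_of_one_le_right (Nat.cast_nonneg T) (by exact_mod_cast hd)
  linarith

end conclusion

/-- Over a field of characteristic zero, for every `0 ≤ μ < 1` there are
constants `c > 0` and `n₀` (depending only on `μ`) such that for every `n ≥ n₀` and every
point `a ∈ F^N`: any representation of the translated polynomial `NW_{n,μ}(X̄ + ā)` as
`∑_{i=1}^T ∏_{j=1}^d Q_{ij}` with each `Q_{ij}` depending on at most `N^μ` variables
satisfies `T·d ≥ n^{c·√n}`. -/
theorem stmt13 (F : Type*) [Field F] [CharZero F] (μ : ℝ) (hμ0 : 0 ≤ μ) (hμ1 : μ < 1) :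
    ∃ c : ℝ, 0 < c ∧ ∃ n₀ : ℕ, ∀ n : ℕ, n₀ ≤ n →
      ∀ (ψ : ℕ) [NeZero ψ], ψ.Prime →
        (n : ℝ) ^ (1 + nwGamma μ) ≤ (ψ : ℝ) →
        (ψ : ℝ) ≤ 2 * (n : ℝ) ^ (1 + nwGamma μ) →
        (∀ ψ' : ℕ, ψ'.Prime → (n : ℝ) ^ (1 + nwGamma μ) ≤ (ψ' : ℝ) →
          (ψ' : ℝ) ≤ 2 * (n : ℝ) ^ (1 + nwGamma μ) → ψ ≤ ψ') →
        ∀ (a : Fin n × ZMod ψ → F)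
          (T d : ℕ) (Q : Fin T → Fin d → MvPolynomial (Fin n × ZMod ψ) F),
          (∀ i j, ((Q i j).vars.card : ℝ) ≤ ((n * ψ : ℕ) : ℝ) ^ μ) →
          aeval (fun v => X v + C (a v)) (NWpoly F μ n ψ) = ∑ i, ∏ j, Q i j →
          (n : ℝ) ^ (c * Real.sqrt n) ≤ ((T * d : ℕ) : ℝ) := by
  have hlog : ∀ᶠ n : ℕ in Filter.atTop, 16 ≤ Real.log n :=
    (Real.tendsto_log_atTop.comp tendsto_natCast_atTop_atTop).eventually_ge_atTop 16
  have hsqrt : ∀ᶠ n : ℕ in Filter.atTop, max 1000 (12 + 4 * nwGamma μ) ≤ √(n : ℝ) :=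
    (Real.tendsto_sqrt_atTop.comp tendsto_natCast_atTop_atTop).eventually_ge_atTop _
  have hsmall : ∀ᶠ n : ℕ in Filter.atTop, Real.log n ≤ √(n : ℝ) / 2 := by
    have h := ((isLittleO_log_rpow_atTop (by norm_num : (0 : ℝ) < 1 / 2)).bound
      (by norm_num : (0 : ℝ) < 1 / 2))
    filter_upwards [tendsto_natCast_atTop_atTop.eventually h] with n hn
    rw [← Real.sqrt_eq_rpow, Real.norm_of_nonneg (Real.sqrt_nonneg _)] at hn
    linarith [Real.le_norm_self (Real.log n)]
  obtain ⟨n₀, hn₀⟩ := Filter.eventually_atTop.mp (hlog.and (hsqrt.and hsmall))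
  refine ⟨1 / 48, by norm_num, n₀, fun n hn ψ _ hψ hlo hhi _ a T d Q hs hQ => ?_⟩
  obtain ⟨hL, hS, hLS⟩ := hn₀ n hn
  have hS1 := (le_max_left _ _).trans hS
  have hS2 := (le_max_right _ _).trans hS
  have : Fact ψ.Prime := ⟨hψ⟩
  have hn0 : (0 : ℝ) < n := Real.sqrt_pos.mp (by linarith)
  have hψ0 : (0 : ℝ) < ψ := Nat.cast_pos.mpr hψ.pos
  have hpow := Real.rpow_pos_of_pos hn0 (1 + nwGamma μ)
  have hlo' : (1 + nwGamma μ) * Real.log n ≤ Real.log ψ := by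
    rw [← Real.log_rpow hn0]
    exact Real.log_le_log hpow hlo
  have hhi' : Real.log ψ ≤ (1 + nwGamma μ) * Real.log n + 1 := by
    have h := Real.log_le_log hψ0 hhi
    rw [Real.log_mul two_ne_zero hpow.ne', Real.log_rpow hn0] at h
    linarith [Real.log_two_lt_d9]
  have hgoal : (n : ℝ) ^ (1 / 48 * √(n : ℝ)) = Real.exp (Real.log n * √n / 48) := by
    rw [Real.rpow_def_of_pos hn0]
    ring_nf
  rw [hgoal, Nat.cast_mul]
  rcases Nat.eq_zero_or_pos d with rfl | hd
  · have h := exp_le_mul_of_translate_eq (T := 1) (d := 1) hμ0 hμ1 hS1 hS2 hL hLS hlo' hhi' le_rfl a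
      (fun _ _ => C (T : F)) (fun _ _ => by rw [vars_C]; simp; positivity) (by rw [hQ]; simp)
    have h2 : 0 < Real.log n * √n / 48 := by positivity
    have h3 := Real.add_one_le_exp (Real.log n * √n / 48)
    norm_num at h
    linarith
  · exact exp_le_mul_of_translate_eq hμ0 hμ1 hS1 hS2 hL hLS hlo' hhi' hd a Q hs hQ
end

section
/- Let F be a field of characteristic zero. Let P' be a nonzero polynomial in the variables {Y_j : j ∈ S} ∪ {X} (for a finite index set S) whose degree in X is at most k, and suppose P' = ∑_{r=1}^{T} ∏_{j=1}^{d} Q'_{rj} where each Q'_{rj} depends on at most v variables. Let g ∈ F[{Y_j : j ∈ S}] be homogeneous of degree a' ≥ 1, and suppose X − g divides P'. Then g can be written as g = ∑_{r=1}^{I'} ∏_{j=1}^{d'} Γ_{rj} where I' ≤ (d·a'² + 1) · binom(k + a' + 1, k + 1) · binom(T·(k+1)³ + a', a')^{k+1}, d' ≤ d·a', and each Γ_{rj} depends on at most v variables. -/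
open MvPolynomial

theorem exists_weights_sum_mul_pow {F : Type*} [Field F] [CharZero F] (n e : ℕ) :
    ∃ w : Fin (n + 1) → F, ∀ m ≤ n,
      ∑ i, w i * ((i : ℕ) : F) ^ m = if m = e then 1 else 0 := by
  classical
  have hinj : Set.InjOn (fun i : Fin (n + 1) => ((i : ℕ) : F))
      (Finset.univ : Finset (Fin (n + 1))) := fun i _ j _ h => by
    simpa [Fin.ext_iff] using h
  refine ⟨fun i => (Lagrange.basis Finset.univ
    (fun i : Fin (n + 1) => ((i : ℕ) : F)) i).coeff e, fun m hm => ?_⟩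
  have h := Lagrange.eq_interpolate (f := (Polynomial.X ^ m : Polynomial F)) hinj (by
    rw [Polynomial.degree_X_pow, Finset.card_univ, Fintype.card_fin]
    exact_mod_cast Nat.lt_succ_of_le hm)
  have h2 := congrArg (fun q => Polynomial.coeff q e) h
  simp only [Lagrange.interpolate_apply, Polynomial.finsetSum_coeff, Polynomial.coeff_C_mul,
    Polynomial.coeff_X_pow, Polynomial.eval_pow, Polynomial.eval_X] at h2
  simp only [mul_comm _ (_ ^ m), ← h2, eq_comm (a := e)]

theorem Polynomial.coeff_mem_span_eval {F R : Type*} [Field F] [CharZero F] [CommRing R]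
    [Algebra F R] {p : Polynomial R} {k : ℕ} (hp : p.natDegree ≤ k) (e : ℕ) :
    p.coeff e ∈ Submodule.span F
      (Set.range fun l : Fin (k + 1) => p.eval (algebraMap F R ((l : ℕ) : F))) := by
  rcases lt_or_ge k e with he | he
  · rw [Polynomial.coeff_eq_zero_of_natDegree_lt (hp.trans_lt he)]
    exact zero_mem _
  obtain ⟨w, hw⟩ := exists_weights_sum_mul_pow (F := F) k e
  rw [Submodule.mem_span_range_iff_exists_fun]
  refine ⟨w, ?_⟩
  simp only [Polynomial.eval_eq_sum_range' (Nat.lt_succ_of_le hp), Finset.smul_sum]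
  rw [Finset.sum_comm]
  have : ∀ m ∈ Finset.range (k + 1),
      ∑ l : Fin (k + 1), w l • (p.coeff m * algebraMap F R ((l : ℕ) : F) ^ m) =
        if m = e then p.coeff m else 0 := by
    intro m hm
    have := congrArg (algebraMap F R) (hw m (Nat.lt_succ_iff.mp (Finset.mem_range.mp hm)))
    simp only [Algebra.smul_def, map_sum, map_mul, map_pow] at this ⊢
    rw [Finset.sum_congr rfl fun l _ => mul_left_comm _ _ _, ← Finset.mul_sum, this]
    split_ifs <;> simp
  rw [Finset.sum_congr rfl this]
  simp [Nat.lt_succ_of_le he]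

theorem Polynomial.exists_iterate_derivative_simple_root {R : Type*} [CommRing R] [IsDomain R]
    [CharZero R] {p : Polynomial R} (hp : p ≠ 0) {g : R} (hg : p.eval g = 0) :
    ∃ n, (derivative^[n] p).eval g = 0 ∧ (derivative (derivative^[n] p)).eval g ≠ 0 := by
  classical
  have hex : ∃ n, ¬ (derivative^[n] p).eval g = 0 := by
    by_contra! h
    exact lt_irrefl _ ((Polynomial.lt_rootMultiplicity_iff_isRoot_iterate_derivative
      (n := p.rootMultiplicity g) hp).mpr fun m _ => h m)
  have hpos : Nat.find hex ≠ 0 := fun h0 => by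
    have := Nat.find_spec hex
    rw [h0] at this
    exact this hg
  obtain ⟨n, hn⟩ := Nat.exists_eq_succ_of_ne_zero hpos
  refine ⟨n, not_not.mp (Nat.find_min hex (hn ▸ Nat.lt_succ_self n)), ?_⟩
  have := Nat.find_spec hex
  rwa [hn, Function.iterate_succ_apply'] at this

theorem Submodule.pow_succ_mod_ideal {F R : Type*} [Field F] [CommRing R] [Algebra F R]
    (I : Ideal R) (hI : ∀ x : R, ∃ c : F, x - algebraMap F R c ∈ I)
    (L : Submodule F R) (hL : 1 ≤ L) (t : ℕ) :
    L ^ (t + 1) ≤ L ^ t ⊔ (I ^ (t + 1)).restrictScalars F := by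
  induction t with
  | zero =>
    intro x _
    obtain ⟨c, hc⟩ := hI x
    refine Submodule.mem_sup.mpr ⟨algebraMap F R c, ?_, _, ?_, add_sub_cancel _ _⟩
    · rw [pow_zero]; exact Submodule.algebraMap_mem c
    · simpa using hc
  | succ t ih =>
    rw [pow_succ, Submodule.mul_le]
    intro x hx l hl
    obtain ⟨w, hw, m, hm, hwm⟩ := Submodule.mem_sup.mp (ih hx)
    obtain ⟨c, hc⟩ := hI l
    have hl₀ : l - algebraMap F R c ∈ L :=
      sub_mem hl (hL (Submodule.algebraMap_mem c))
    refine Submodule.mem_sup.mpr ⟨c • x + w * (l - algebraMap F R c), ?_,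
      m * (l - algebraMap F R c), ?_, ?_⟩
    · exact add_mem (Submodule.smul_mem _ _ hx) (pow_succ L t ▸ Submodule.mul_mem_mul hw hl₀)
    · exact (pow_succ I (t + 1)) ▸ Ideal.mul_mem_mul hm hc
    · rw [← hwm, Algebra.smul_def]; ring

theorem Submodule.pow_mod_ideal {F R : Type*} [Field F] [CommRing R] [Algebra F R]
    (I : Ideal R) (hI : ∀ x : R, ∃ c : F, x - algebraMap F R c ∈ I)
    (L : Submodule F R) (hL : 1 ≤ L) (t n : ℕ) :
    L ^ n ≤ L ^ t ⊔ (I ^ (t + 1)).restrictScalars F := by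
  induction n with
  | zero => exact le_sup_of_le_left (pow_zero L ▸ one_le_pow_of_one_le' hL t)
  | succ n ih =>
    rw [pow_succ, Submodule.mul_le]
    intro x hx l hl
    obtain ⟨w, hw, m, hm, rfl⟩ := Submodule.mem_sup.mp (ih hx)
    rw [add_mul]
    refine add_mem (Submodule.pow_succ_mod_ideal I hI L hL t
      (pow_succ L t ▸ Submodule.mul_mem_mul hw hl)) (Submodule.mem_sup_right ?_)
    exact Ideal.mul_mem_right _ _ hm

/-- Newton iteration: a simple root modulo `I` of a polynomial with coefficients in `L` is
approximated modulo `I ^ (t + 1)` by elements of `L ^ t`. -/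
theorem Polynomial.exists_mem_pow_sub_mem_of_simple_root {F R : Type*} [Field F] [CommRing R]
    [Algebra F R] (I : Ideal R) (hI : ∀ x : R, ∃ c : F, x - algebraMap F R c ∈ I)
    (L : Submodule F R) (hL : 1 ≤ L) (q : Polynomial R) (hq : ∀ i, q.coeff i ∈ L)
    (g : R) (hg : q.eval g = 0) (hg' : (derivative q).eval g ∉ I) (t : ℕ) :
    ∃ W ∈ L ^ t, g - W ∈ I ^ (t + 1) := by
  suffices h : ∀ t, ∃ n, ∃ U ∈ L ^ n, g - U ∈ I ^ (t + 1) by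
    obtain ⟨n, U, hU, hgU⟩ := h t
    obtain ⟨w, hw, m, hm, rfl⟩ := Submodule.mem_sup.mp (Submodule.pow_mod_ideal I hI L hL t n hU)
    refine ⟨w, hw, ?_⟩
    have : g - w = (g - (w + m)) + m := by ring
    rw [this]
    exact add_mem hgU hm
  obtain ⟨ξ, hξ⟩ := hI ((derivative q).eval g)
  have hξ0 : ξ ≠ 0 := by
    rintro rfl
    simp only [map_zero, sub_zero] at hξ
    exact hg' hξ
  intro t
  induction t with
  | zero =>
    obtain ⟨c, hc⟩ := hI g
    refine ⟨0, algebraMap F R c, ?_, by simpa using hc⟩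
    rw [pow_zero]; exact Submodule.algebraMap_mem c
  | succ t ih =>
    obtain ⟨n, U, hU, hgU⟩ := ih
    have hmono : ∀ {a b : ℕ}, a ≤ b → L ^ a ≤ L ^ b := fun h => pow_le_pow_right' hL h
    refine ⟨n + (1 + n * q.natDegree), U - ξ⁻¹ • q.eval U, ?_, ?_⟩
    · refine sub_mem (hmono (Nat.le_add_right _ _) hU)
        (hmono (Nat.le_add_left _ _) (Submodule.smul_mem _ _ ?_))
      rw [Polynomial.eval_eq_sum_range]
      refine sum_mem fun i hi => ?_
      have hi' : i ≤ q.natDegree := Nat.lt_succ_iff.mp (Finset.mem_range.mp hi)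
      refine hmono (Nat.add_le_add_left (Nat.mul_le_mul_left n hi') 1) ?_
      rw [pow_add, pow_one, pow_mul]
      exact Submodule.mul_mem_mul (hq i) (Submodule.pow_mem_pow _ hU i)
    · obtain ⟨z, hz⟩ := q.binomExpansion g (U - g)
      rw [add_sub_cancel, hg, zero_add] at hz
      have key : g - (U - ξ⁻¹ • q.eval U) = ξ⁻¹ • ((g - U) * (-((derivative q).eval g
          - algebraMap F R ξ) + z * (g - U))) := by
        have h1 : algebraMap F R ξ⁻¹ * algebraMap F R ξ = 1 := by
          rw [← map_mul, inv_mul_cancel₀ hξ0, map_one]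
        rw [hz, Algebra.smul_def, Algebra.smul_def]
        linear_combination (-(g - U)) * h1
      rw [key, Algebra.smul_def]
      refine Ideal.mul_mem_left _ _ ?_
      rw [pow_succ]
      refine Ideal.mul_mem_mul hgU (add_mem (neg_mem hξ) (Ideal.mul_mem_left _ _ ?_))
      exact Ideal.pow_le_self (Nat.succ_ne_zero t) hgU

theorem Sym.exists_fin_map_eq {κ : Type*} {n : ℕ} (s : Sym κ n) :
    ∃ y : Fin n → κ, Multiset.map y Finset.univ.val = s := by
  obtain ⟨s, hs⟩ := s
  induction s using Quotient.inductionOn with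
  | h l =>
    obtain rfl : l.length = n := hs
    exact ⟨l.get, by simp [Fin.univ_val_map]⟩

/-- Elements of the `n`-th power of the span of a finite family are combinations of products
indexed by multisets of size `n`. -/
theorem Submodule.exists_sum_sym_of_mem_span_pow {F R κ : Type*} [Field F] [CommRing R]
    [Algebra F R] [Fintype κ] [DecidableEq κ] (M : κ → R) (n : ℕ) {W : R}
    (hW : W ∈ Submodule.span F (Set.range M) ^ n) :
    ∃ (c : Sym κ n → F) (o : Sym κ n → Fin n → κ), W = ∑ s, c s • ∏ i, M (o s i) := by
  choose o ho using fun s : Sym κ n => s.exists_fin_map_eq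
  rw [Submodule.span_pow] at hW
  have : W ∈ Submodule.span F (Set.range fun s : Sym κ n => ∏ i, M (o s i)) := by
    refine Submodule.span_mono ?_ hW
    intro x hx
    obtain ⟨f, rfl⟩ := Set.mem_pow.mp hx
    choose y hy using fun i => (f i).2
    let s : Sym κ n := ⟨Multiset.map y Finset.univ.val, by simp⟩
    refine ⟨s, ?_⟩
    have h : ∀ z : Fin n → κ, ∏ i, M (z i) = ((Finset.univ.val.map z).map M).prod := fun z => by
      rw [Multiset.map_map]; rfl
    change ∏ i, M (o s i) = _
    rw [h, ho s, List.prod_ofFn]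
    simp only [← hy, h]
    rfl
  obtain ⟨c, hc⟩ := (Submodule.mem_span_range_iff_exists_fun F).mp this
  exact ⟨c, o, hc.symm⟩

/-- The part of a polynomial of total degree at most `n`. -/
noncomputable def MvPolynomial.truncateLE {σ R : Type*} [CommSemiring R] (n : ℕ)
    (f : MvPolynomial σ R) : MvPolynomial σ R :=
  ∑ i ∈ Finset.range (n + 1), homogeneousComponent i f

theorem MvPolynomial.coeff_truncateLE {σ R : Type*} [CommSemiring R] (n : ℕ)
    (f : MvPolynomial σ R) (m : σ →₀ ℕ) :
    coeff m (truncateLE n f) = if m.degree ≤ n then coeff m f else 0 := by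
  simp [truncateLE, coeff_sum, coeff_homogeneousComponent]

theorem MvPolynomial.sub_truncateLE_mem {σ R : Type*} [CommRing R] (n : ℕ)
    (f : MvPolynomial σ R) : f - truncateLE n f ∈ idealOfVars σ R ^ (n + 1) := by
  rw [mem_pow_idealOfVars_iff']
  intro x hx
  simp [coeff_truncateLE, Nat.lt_succ_iff.mp hx]

theorem MvPolynomial.totalDegree_truncateLE {σ R : Type*} [CommSemiring R] (n : ℕ)
    (f : MvPolynomial σ R) : (truncateLE n f).totalDegree ≤ n := by
  refine totalDegree_finsetSum_le fun i hi => ?_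
  exact (homogeneousComponent_isHomogeneous i f).totalDegree_le.trans
    (Nat.lt_succ_iff.mp (Finset.mem_range.mp hi))

theorem MvPolynomial.vars_truncateLE {σ R : Type*} [CommSemiring R] (n : ℕ)
    (f : MvPolynomial σ R) : (truncateLE n f).vars ⊆ f.vars := by
  intro i hi
  rw [mem_vars_iff_mem_support] at hi ⊢
  obtain ⟨m, hm, him⟩ := hi
  refine ⟨m, ?_, him⟩
  rw [mem_support_iff, coeff_truncateLE] at hm
  rw [mem_support_iff]
  intro h
  simp [h] at hm

theorem MvPolynomial.card_vars_aeval_le {σ τ R : Type*} [CommSemiring R]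
    (f : σ → MvPolynomial τ R) (hf : ∀ i, (f i).vars.card ≤ 1) (p : MvPolynomial σ R) :
    (aeval f p).vars.card ≤ p.vars.card := by
  classical
  calc (aeval f p).vars.card ≤ (p.vars.biUnion fun i => (f i).vars).card :=
        Finset.card_le_card (vars_bind₁ f p)
    _ ≤ p.vars.card * 1 := Finset.card_biUnion_le_card_mul _ _ _ fun i _ => hf i
    _ = p.vars.card := mul_one _

theorem MvPolynomial.homogeneousComponent_eq_of_sub_mem {σ R : Type*} [CommRing R] {n : ℕ}
    {f g : MvPolynomial σ R} (h : f - g ∈ idealOfVars σ R ^ (n + 1)) :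
    homogeneousComponent n f = homogeneousComponent n g := by
  rw [mem_pow_idealOfVars_iff'] at h
  ext m
  simp only [coeff_homogeneousComponent]
  split_ifs with hm
  · exact sub_eq_zero.mp (by simpa using h m (by omega))
  · rfl

theorem MvPolynomial.aeval_C_mul_X_homogeneous {σ R : Type*} [CommSemiring R] {n : ℕ}
    {f : MvPolynomial σ R} (hf : f.IsHomogeneous n) (t : R) :
    aeval (fun i => C t * X i) f = t ^ n • f := by
  conv_lhs => rw [f.as_sum]
  conv_rhs => rw [f.as_sum]
  rw [map_sum, Finset.smul_sum]
  refine Finset.sum_congr rfl fun m hm => ?_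
  have hdeg : m.degree = n := by
    by_contra h
    exact (mem_support_iff.mp hm) (hf.coeff_eq_zero h)
  rw [aeval_monomial, monomial_eq, smul_eq_C_mul, ← hdeg, Finsupp.degree_apply]
  simp only [mul_pow, Finsupp.prod, Finset.prod_mul_distrib, algebraMap_eq,
    Finset.prod_pow_eq_pow_sum, map_pow]
  ring

theorem MvPolynomial.homogeneousComponent_eq_sum_scale {σ F : Type*} [Field F] [CharZero F]
    (D e : ℕ) : ∃ w : Fin (D + 1) → F, ∀ f : MvPolynomial σ F, f.totalDegree ≤ D →
      homogeneousComponent e f = ∑ i, w i • aeval (fun s => C ((i : ℕ) : F) * X s) f := by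
  obtain ⟨w, hw⟩ := exists_weights_sum_mul_pow (F := F) D e
  refine ⟨w, fun f hf => ?_⟩
  have hsum : f = ∑ m ∈ Finset.range (D + 1), homogeneousComponent m f := by
    conv_lhs => rw [← sum_homogeneousComponent f]
    refine Finset.sum_subset (Finset.range_mono (by omega)) fun m _ hm => ?_
    exact homogeneousComponent_eq_zero _ _ (by simpa using hm)
  have hscale : ∀ t : F, aeval (fun s => C t * X s) f =
      ∑ m ∈ Finset.range (D + 1), t ^ m • homogeneousComponent m f := by
    intro t
    conv_lhs => rw [hsum]
    rw [map_sum]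
    exact Finset.sum_congr rfl fun m _ =>
      aeval_C_mul_X_homogeneous (homogeneousComponent_isHomogeneous m f) t
  simp only [hscale, Finset.smul_sum, smul_smul]
  rw [Finset.sum_comm]
  simp only [← Finset.sum_smul]
  rw [Finset.sum_congr rfl fun m hm => by
    rw [hw m (Nat.lt_succ_iff.mp (Finset.mem_range.mp hm))]]
  simp only [ite_smul, one_smul, zero_smul, Finset.sum_ite_eq', Finset.mem_range]
  split_ifs with h
  · rfl
  · exact homogeneousComponent_eq_zero _ _ (by omega)

theorem MvPolynomial.exists_coeff_translate_monomial_sub_eq_zero {σ R : Type*} [CommRing R]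
    (c : σ → R) (m : σ →₀ ℕ) (a : R) : ∃ n, (monomial m a).IsHomogeneous n ∧
      (aeval (fun i => X i + C (c i)) (monomial m a)).totalDegree ≤ n ∧
      ∀ x : σ →₀ ℕ, n ≤ x.degree →
        coeff x (aeval (fun i => X i + C (c i)) (monomial m a) - monomial m a) = 0 := by
  classical
  refine induction_on_monomial (motive := fun p : MvPolynomial σ R => ∃ n, p.IsHomogeneous n ∧
      (aeval (fun i => X i + C (c i)) p).totalDegree ≤ n ∧ ∀ x : σ →₀ ℕ, n ≤ x.degree →
        coeff x (aeval (fun i => X i + C (c i)) p - p) = 0) (fun a => ?_) (fun p i ih => ?_) m a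
  · exact ⟨0, isHomogeneous_C _ a, by simp [algebraMap_eq], by simp [algebraMap_eq]⟩
  · obtain ⟨n, hp, hdeg, hcoeff⟩ := ih
    refine ⟨n + 1, hp.mul (isHomogeneous_X R i), ?_, fun x hx => ?_⟩
    · rw [map_mul, aeval_X]
      refine (totalDegree_mul _ _).trans (add_le_add hdeg ((totalDegree_add _ _).trans ?_))
      rw [totalDegree_C]
      refine max_le ((isHomogeneous_X R i).totalDegree_le) (Nat.zero_le _)
    · have h : ∀ q : MvPolynomial σ R, q * (X i + C (c i)) - p * X i
          = (q - p) * X i + C (c i) * q := fun q => by ring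
      rw [map_mul, aeval_X, h, coeff_add, coeff_C_mul, coeff_mul_X',
        coeff_eq_zero_of_totalDegree_lt (d := x) (by
          rw [Finsupp.degree_apply] at hx
          omega), mul_zero, add_zero]
      split_ifs with hi
      · refine hcoeff _ ?_
        have h2 : x - Finsupp.single i 1 + Finsupp.single i 1 = x :=
          tsub_add_cancel_of_le (by
            rw [Finsupp.single_le_iff]
            exact Nat.one_le_iff_ne_zero.mpr (Finsupp.mem_support_iff.mp hi))
        have h3 := congrArg Finsupp.degree h2
        rw [map_add, Finsupp.degree_single] at h3
        omega
      · rfl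

theorem MvPolynomial.homogeneousComponent_translate {σ R : Type*} [CommRing R] (c : σ → R) {n : ℕ}
    {g : MvPolynomial σ R} (hg : g.IsHomogeneous n) :
    homogeneousComponent n (aeval (fun i => X i + C (c i)) g) = g := by
  conv_lhs => rw [g.as_sum]
  conv_rhs => rw [g.as_sum]
  rw [map_sum, map_sum]
  refine Finset.sum_congr rfl fun m hm => ?_
  obtain ⟨n', hn', -, hcoeff⟩ := exists_coeff_translate_monomial_sub_eq_zero c m (coeff m g)
  have hne := mem_support_iff.mp hm
  have hmn : (monomial m (coeff m g)).IsHomogeneous n :=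
    isHomogeneous_monomial _ (by
      by_contra h
      exact hne (hg.coeff_eq_zero h))
  obtain rfl : n' = n := hn'.inj_right hmn (by simpa using hne)
  conv_rhs => rw [← homogeneousComponent_eq_self hmn]
  ext x
  simp only [coeff_homogeneousComponent]
  split_ifs with hx
  · exact sub_eq_zero.mp (by simpa using hcoeff x hx.ge)
  · rfl

/-- View a polynomial in the variables `S ⊕ Unit` as a univariate polynomial over the polynomials
in the variables `S`. -/
noncomputable def MvPolynomial.toUnivariate (S F : Type*) [CommSemiring F] :
    MvPolynomial (S ⊕ Unit) F →ₐ[F] Polynomial (MvPolynomial S F) :=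
  aeval (Sum.elim (fun s => Polynomial.C (X s)) fun _ => Polynomial.X)

theorem MvPolynomial.toUnivariate_injective (S F : Type*) [CommSemiring F] :
    Function.Injective (toUnivariate S F) := by
  let ψ : Polynomial (MvPolynomial S F) →+* MvPolynomial (S ⊕ Unit) F :=
    Polynomial.eval₂RingHom (rename Sum.inl).toRingHom (X (Sum.inr ()))
  have h : ψ.comp (toUnivariate S F).toRingHom = RingHom.id _ := by
    refine MvPolynomial.ringHom_ext (fun a => ?_) fun i => ?_
    · simp [ψ, toUnivariate, Polynomial.algebraMap_apply, algebraMap_eq]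
    · rcases i with s | ⟨⟩ <;> simp [ψ, toUnivariate]
  exact Function.LeftInverse.injective (g := ψ) fun p => RingHom.congr_fun h p

theorem MvPolynomial.natDegree_toUnivariate_le {S F : Type*} [CommSemiring F]
    (p : MvPolynomial (S ⊕ Unit) F) :
    (toUnivariate S F p).natDegree ≤ p.degreeOf (Sum.inr ()) := by
  classical
  conv_lhs => rw [p.as_sum, map_sum]
  refine Polynomial.natDegree_sum_le_of_forall_le _ _ fun m hm => ?_
  have hle : m (Sum.inr ()) ≤ p.degreeOf (Sum.inr ()) := monomial_le_degreeOf _ hm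
  rw [toUnivariate, aeval_monomial, IsScalarTower.algebraMap_apply F (MvPolynomial S F),
    Polynomial.algebraMap_apply]
  refine (Polynomial.natDegree_C_mul_le _ _).trans ((Polynomial.natDegree_prod_le _ _).trans ?_)
  refine le_trans ?_ hle
  calc ∑ i ∈ m.support, _ ≤ ∑ i ∈ m.support, if i = Sum.inr () then m i else 0 := by
        refine Finset.sum_le_sum fun i _ => ?_
        rcases i with s | ⟨⟩
        · change (Polynomial.C (X s) ^ m (Sum.inl s)).natDegree ≤ _
          rw [← Polynomial.C_pow, Polynomial.natDegree_C]
          exact Nat.zero_le _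
        · simpa using Polynomial.natDegree_X_pow_le _
    _ ≤ m (Sum.inr ()) := by
        rw [Finset.sum_ite_eq']
        split_ifs <;> simp

theorem MvPolynomial.eval_toUnivariate {S F : Type*} [CommSemiring F]
    (p : MvPolynomial (S ⊕ Unit) F) (a : MvPolynomial S F) :
    (toUnivariate S F p).eval a = aeval (Sum.elim X fun _ => a) p := by
  have h : (Polynomial.evalRingHom a).comp (toUnivariate S F).toRingHom =
      (aeval (R := F) (Sum.elim X fun _ => a)).toRingHom := by
    refine MvPolynomial.ringHom_ext (fun a => ?_) fun i => ?_
    · simp [toUnivariate, Polynomial.algebraMap_apply, algebraMap_eq]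
    · rcases i with s | ⟨⟩ <;> simp [toUnivariate]
  exact RingHom.congr_fun h p

/-- Scalars are absorbed into one of the factors, and the index types are enumerated. -/
theorem MvPolynomial.exists_fin_sum_prod {S F K P : Type*} [Field F] [Fintype K] [Fintype P]
    [Nonempty P] (v : ℕ) (c : K → F) (f : K → P → MvPolynomial S F)
    (hf : ∀ x p, (f x p).vars.card ≤ v) :
    ∃ Γ : Fin (Fintype.card K) → Fin (Fintype.card P) → MvPolynomial S F,
      (∀ r j, (Γ r j).vars.card ≤ v) ∧ ∑ x, c x • ∏ p, f x p = ∑ r, ∏ j, Γ r j := by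
  classical
  obtain ⟨p₀⟩ := ‹Nonempty P›
  let eK := Fintype.equivFin K
  let eP := Fintype.equivFin P
  let Δ : K → P → MvPolynomial S F := fun x p => (if p = p₀ then c x else 1) • f x p
  have hΔ : ∀ x, ∏ p, Δ x p = c x • ∏ p, f x p := fun x => by
    simp only [Δ, smul_eq_C_mul, Finset.prod_mul_distrib, ← map_prod]
    simp
  refine ⟨fun r j => Δ (eK.symm r) (eP.symm j), fun r j => ?_, ?_⟩
  · refine (Finset.card_le_card ?_).trans (hf (eK.symm r) (eP.symm j))
    intro i hi
    rw [mem_vars_iff_mem_support] at hi ⊢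
    obtain ⟨m, hm, him⟩ := hi
    exact ⟨m, support_smul hm, him⟩
  · rw [← Fintype.sum_equiv eK.symm (fun r => ∏ p, Δ (eK.symm r) p) _ fun r => hΔ _]
    exact Finset.sum_congr rfl fun r _ =>
      (Fintype.prod_equiv eP.symm _ _ fun j => rfl).symm

/-- Let `P'` be a nonzero polynomial in the variables `{Y_j : j ∈ S} ∪ {X}`
of degree at most `k` in `X`, with `P' = ∑_{r=1}^T ∏_{j=1}^d Q'_{rj}` where each `Q'_{rj}`
depends on at most `v` variables. Let `g ∈ F[{Y_j : j ∈ S}]` be homogeneous of degree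
`a' ≥ 1` with `X - g` dividing `P'`. Then `g = ∑_{r=1}^{I'} ∏_{j=1}^{d'} Γ_{rj}` with
`I' ≤ (d·a'² + 1)·binom(k+a'+1, k+1)·binom(T·(k+1)³ + a', a')^{k+1}`, `d' ≤ d·a'` and each
`Γ_{rj}` depending on at most `v` variables. -/
theorem stmt18 (F : Type*) [Field F] [CharZero F]
    (S : Type*) [Fintype S] [DecidableEq S]
    (k T d v a' : ℕ) (ha' : 1 ≤ a')
    (P' : MvPolynomial (S ⊕ Unit) F) (hP0 : P' ≠ 0)
    (hdeg : P'.degreeOf (Sum.inr ()) ≤ k)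
    (Q' : Fin T → Fin d → MvPolynomial (S ⊕ Unit) F)
    (hrep : P' = ∑ r, ∏ j, Q' r j)
    (hvars : ∀ r j, (Q' r j).vars.card ≤ v)
    (g : MvPolynomial S F) (hg : g.IsHomogeneous a')
    (hdvd : (X (Sum.inr ()) - rename Sum.inl g) ∣ P') :
    ∃ I' d' : ℕ,
      I' ≤ (d * a' ^ 2 + 1) * (k + a' + 1).choose (k + 1) *
        ((T * (k + 1) ^ 3 + a').choose a') ^ (k + 1) ∧
      d' ≤ d * a' ∧
      ∃ Γ : Fin I' → Fin d' → MvPolynomial S F,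
        (∀ r j, (Γ r j).vars.card ≤ v) ∧
        g = ∑ r, ∏ j, Γ r j := by
  have hroot : aeval (Sum.elim X fun _ => g) P' = 0 := by
    obtain ⟨A, rfl⟩ := hdvd
    rw [map_mul, map_sub, aeval_X, aeval_rename, Sum.elim_inr, Sum.elim_comp_inl, aeval_X_left,
      AlgHom.id_apply, sub_self, zero_mul]
  have hd : 0 < d := by
    rcases Nat.eq_zero_or_pos d with rfl | h
    · have hT : P' = (T : MvPolynomial (S ⊕ Unit) F) := by simp [hrep]
      rw [hT, map_natCast, Nat.cast_eq_zero] at hroot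
      exact absurd (by rw [hT, hroot, Nat.cast_zero]) hP0
    · exact h
  set p := toUnivariate S F P' with hp
  have hp0 : p ≠ 0 := fun h => hP0 (toUnivariate_injective S F (by rw [← hp, h, map_zero]))
  obtain ⟨n, hq, hq'⟩ := Polynomial.exists_iterate_derivative_simple_root hp0
    (g := g) (by rw [hp, eval_toUnivariate, hroot])
  set q := Polynomial.derivative^[n] p with hqdef
  obtain ⟨c, hc⟩ : ∃ c : S → F, eval c ((Polynomial.derivative q).eval g) ≠ 0 := by
    by_contra! h
    exact hq' (MvPolynomial.funext fun x => by rw [h x, map_zero])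
  let τ : MvPolynomial S F →ₐ[F] MvPolynomial S F := aeval fun i => X i + C (c i)
  let N : Option (Fin T × Fin (k + 1)) → Fin d → MvPolynomial S F := fun o j =>
    o.elim 1 fun rl => aeval (Sum.elim (fun s => X s + C (c s)) fun _ => C ((rl.2 : ℕ) : F))
      (Q' rl.1 j)
  have hNvars : ∀ o j, (N o j).vars.card ≤ v := by
    rintro (_ | ⟨r, l⟩) j
    · simp [N]
    · refine (card_vars_aeval_le _ (fun i => ?_) _).trans (hvars r j)
      rcases i with s | ⟨⟩
      · refine (Finset.card_le_card (vars_add_subset _ _)).trans ?_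
        rw [vars_X, vars_C]
        simp
      · rw [Sum.elim_inr, vars_C]
        simp
  let M : Option (Fin T × Fin (k + 1)) → MvPolynomial S F := fun o => ∏ j, N o j
  let L : Submodule F (MvPolynomial S F) := Submodule.span F (Set.range M)
  have hL : 1 ≤ L := Submodule.one_le.mpr (Submodule.subset_span ⟨none, by simp [M, N]⟩)
  have hcoeff : ∀ e, τ (p.coeff e) ∈ L := by
    intro e
    have h := Submodule.mem_map_of_mem (f := τ.toLinearMap)
      (Polynomial.coeff_mem_span_eval (F := F)
        ((natDegree_toUnivariate_le P').trans hdeg) e)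
    rw [Submodule.map_span] at h
    refine Submodule.span_le.mpr ?_ h
    rintro _ ⟨_, ⟨l, rfl⟩, rfl⟩
    have hcomp : ∀ f : MvPolynomial (S ⊕ Unit) F,
        τ (aeval (Sum.elim X fun _ => algebraMap F _ ((l : ℕ) : F)) f) =
          aeval (Sum.elim (fun s => X s + C (c s)) fun _ => C ((l : ℕ) : F)) f := by
      intro f
      rw [← AlgHom.comp_apply]
      congr 1
      ext i : 1
      rcases i with s | ⟨⟩
      · simp [τ]
      · simp [algebraMap_eq]
    have : τ ((toUnivariate S F P').eval (algebraMap F _ ((l : ℕ) : F))) =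
        ∑ r, M (some (r, l)) := by
      rw [eval_toUnivariate, hcomp, hrep, map_sum]
      exact Finset.sum_congr rfl fun r _ => map_prod _ _ _
    change τ _ ∈ L
    rw [this]
    exact sum_mem fun r _ => Submodule.subset_span ⟨_, rfl⟩
  have hI : ∀ x : MvPolynomial S F, ∃ a : F,
      x - algebraMap F (MvPolynomial S F) a ∈ idealOfVars S F := fun x => by
    refine ⟨constantCoeff x, ?_⟩
    rw [← pow_one (idealOfVars S F), mem_pow_idealOfVars_iff']
    intro m hm
    obtain rfl : m = 0 := (Finsupp.degree_eq_zero_iff m).mp (by omega)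
    simp [algebraMap_eq, constantCoeff_eq]
  obtain ⟨W, hW, hgW⟩ := Polynomial.exists_mem_pow_sub_mem_of_simple_root (idealOfVars S F) hI L hL
    (q.map (τ : MvPolynomial S F →+* MvPolynomial S F)) (fun i => by
      rw [Polynomial.coeff_map, hqdef, Polynomial.coeff_iterate_derivative]
      rw [RingHom.coe_coe, map_nsmul]
      exact nsmul_mem (hcoeff _) _)
    (τ g) (by
      rw [← RingHom.coe_coe τ, Polynomial.eval_map_apply, hq, map_zero])
    (by
      rw [Polynomial.derivative_map, ← RingHom.coe_coe τ, Polynomial.eval_map_apply]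
      intro h
      rw [← pow_one (idealOfVars S F), mem_pow_idealOfVars_iff'] at h
      have h0 := h 0 (by simp)
      rw [← constantCoeff_eq] at h0
      refine hc ?_
      rw [← h0]
      have : (eval c : MvPolynomial S F →+* F) =
          (constantCoeff : MvPolynomial S F →+* F).comp τ := by
        refine MvPolynomial.ringHom_ext (fun a => ?_) fun i => ?_ <;> simp [τ, algebraMap_eq]
      exact RingHom.congr_fun this _) a'
  obtain ⟨b, o, hWsum⟩ := Submodule.exists_sum_sym_of_mem_span_pow M a' hW
  let f : Sym (Option (Fin T × Fin (k + 1))) a' → Fin a' × Fin d → MvPolynomial S F :=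
    fun s x => truncateLE a' (N (o s x.1) x.2)
  have hWf : W - ∑ s, b s • ∏ x, f s x ∈ idealOfVars S F ^ (a' + 1) := by
    rw [hWsum, ← Finset.sum_sub_distrib]
    refine sum_mem fun s _ => ?_
    rw [← smul_sub, smul_eq_C_mul]
    refine Ideal.mul_mem_left _ _ (Ideal.Quotient.eq.mp ?_)
    simp only [M, f, Fintype.prod_prod_type, map_prod]
    exact Finset.prod_congr rfl fun i _ => Finset.prod_congr rfl fun j _ =>
      Ideal.Quotient.eq.mpr (sub_truncateLE_mem _ _)
  have hgf : g = homogeneousComponent a' (∑ s, b s • ∏ x, f s x) := by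
    rw [← homogeneousComponent_eq_of_sub_mem (sub_add_sub_cancel (τ g) W _ ▸ add_mem hgW hWf)]
    exact (homogeneousComponent_translate c hg).symm
  obtain ⟨w, hw⟩ := homogeneousComponent_eq_sum_scale (σ := S) (F := F) (d * a' ^ 2) a'
  have hfdeg : ∀ s, (∏ x, f s x).totalDegree ≤ d * a' ^ 2 := fun s => by
    refine (totalDegree_finsetProd _ _).trans
      ((Finset.sum_le_card_nsmul _ _ a' fun x _ => totalDegree_truncateLE _ _).trans ?_)
    simp only [Finset.card_univ, Fintype.card_prod, Fintype.card_fin, smul_eq_mul]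
    exact le_of_eq (by ring)
  have : Nonempty (Fin a' × Fin d) := ⟨(⟨0, ha'⟩, ⟨0, hd⟩)⟩
  obtain ⟨Γ, hΓ, hΓsum⟩ := exists_fin_sum_prod (S := S) (F := F)
    (K := Fin (d * a' ^ 2 + 1) × Sym (Option (Fin T × Fin (k + 1))) a') (P := Fin a' × Fin d) v
    (fun y => w y.1 * b y.2)
    (fun y x => aeval (fun s => C ((y.1 : ℕ) : F) * X s) (f y.2 x)) (fun y x => by
      refine (card_vars_aeval_le _ (fun s => ?_) _).trans
        ((Finset.card_le_card (vars_truncateLE _ _)).trans (hNvars _ _))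
      refine (Finset.card_le_card (vars_mul _ _)).trans ?_
      rw [vars_X, vars_C]
      simp)
  refine ⟨_, _, ?_, ?_, Γ, hΓ, ?_⟩
  · rw [Fintype.card_prod, Fintype.card_fin, Sym.card_sym_eq_choose, mul_assoc]
    refine Nat.mul_le_mul_left _ ?_
    simp only [Fintype.card_option, Fintype.card_prod, Fintype.card_fin]
    refine le_trans ?_ (Nat.le_mul_of_pos_left _ (Nat.choose_pos (by omega)))
    refine le_trans (Nat.choose_le_choose _ ?_) (Nat.le_self_pow (Nat.succ_ne_zero k) _)
    have : T * (k + 1) ≤ T * (k + 1) ^ 3 :=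
      Nat.mul_le_mul_left _ (Nat.le_self_pow (by norm_num) _)
    omega
  · simp [mul_comm]
  · rw [← hΓsum, Fintype.sum_prod_type_right]
    conv_lhs => rw [hgf]
    rw [map_sum]
    refine Finset.sum_congr rfl fun s _ => ?_
    rw [map_smul, hw _ (hfdeg s), Finset.smul_sum]
    refine Finset.sum_congr rfl fun i _ => ?_
    rw [smul_smul, mul_comm, map_prod]
end
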